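/- Let k be a number field. Then the set k^× − k^{×2} of nonzero elements of k that are not squares is diophantine over k. -/

import Mathlib

/-- A subset `A ⊆ k^n` is diophantine over `k` if there exist `m ∈ ℕ` and finitely many
polynomials `f₁, …, f_r ∈ k[x₁, …, x_{n+m}]` such that
`A = {a ∈ k^n : ∃ b ∈ k^m, f_i(a,b) = 0 for all i}`. -/
def IsDiophantine (k : Type*) [Field k] {n : ℕ} (A : Set (Fin n → k)) : Prop :=
  ∃ (m r : ℕ) (f : Fin r → MvPolynomial (Fin (n + m)) k),
    A = {a : Fin n → k | ∃ b : Fin m → k,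
      ∀ i : Fin r, MvPolynomial.eval (Fin.append a b) (f i) = 0}

/-- A subset of `k` is diophantine if the corresponding subset of `k¹` is. -/
def IsDiophantineSet (k : Type*) [Field k] (A : Set k) : Prop :=
  IsDiophantine k {x : Fin 1 → k | x 0 ∈ A}

/-!
Choose primes `c`, `d` such that `c ≡ 1 mod 8`, `d` is a square modulo `c`, and none of `c`, `d`,
`c d` is a square in `k`. Let `ρ` be the completely multiplicative function on the positive integers
that takes the value `-1` at the primes modulo which neither `c` nor `d` is a square, and `1` at all
other primes. Extended to `ℚ` and composed with the norm `k → ℚ`, it is a sign `k^× → {±1}` that is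
trivial on the nonzero values of `x² - c y²`, `x² - d y²` and `x² - c d y²`; hence no form
`x² - c t y²` with `t` a square has a value of sign `-1`.

If none of `t`, `c t`, `d t`, `c d t` is a square, then `x² - c t y²` does have a value of sign
`-1`. Otherwise, for `E = k(√(c t))`, the function `ρ ∘ N` would be trivial on the principal ideals
of `E` but `-1` at some prime `J`. Then, for `γ ≠ 0` in the ring of integers of `E`, the involution
`I ↦ (γ) / (I J)` shows that `∑ ρ(N I)` over the ideals `I` with `γ ∈ I J` vanishes. Summing over
all `γ` in a large box and counting the lattice points of `I J` bounds the partial sums of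
`∑ ρ(N I) / N I`. By the Euler product, `∑ ρ(N P) (N P)⁻ˢ` stays bounded above as `s → 1⁺`, whereas
it tends to infinity because `ρ ∘ N` is `-1` at only a quarter of the primes of `E`.

The values of the three norm forms generate a subgroup of finite index in `k^×`: modulo every prime
one of `c`, `d`, `c d` is a square, so the subgroup has elements that generate the prime up to a
cofactor of bounded norm. So having sign `-1` means lying in one of finitely many cosets of a
subgroup described by polynomial equations.
-/

section CoordBox

open Finset

theorem exists_ne_zero_abs_le_map_eq_zero {κ G : Type*} [Fintype κ] [AddCommGroup G] [Finite G]
    (φ : (κ → ℤ) →+ G) (M : ℕ) (h : Nat.card G < (M + 1) ^ Fintype.card κ) :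
    ∃ v : κ → ℤ, v ≠ 0 ∧ (∀ i, |v i| ≤ M) ∧ φ v = 0 := by
  classical
  have := Fintype.ofFinite G
  let vec : (κ → Fin (M + 1)) → κ → ℤ := fun x i => (x i : ℕ)
  have hcard : Fintype.card G < Fintype.card (κ → Fin (M + 1)) := by
    rw [← Nat.card_eq_fintype_card]
    simpa using h
  obtain ⟨x, y, hxy, he⟩ := Fintype.exists_ne_map_eq_of_card_lt (φ ∘ vec) hcard
  refine ⟨vec x - vec y, fun h0 => hxy ?_, fun i => ?_, by rw [map_sub, sub_eq_zero]; exact he⟩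
  · funext i
    have : ((x i : ℕ) : ℤ) - (y i : ℕ) = 0 := congrFun h0 i
    exact Fin.ext (by lia)
  · change |((x i : ℕ) : ℤ) - (y i : ℕ)| ≤ M
    have hx := (x i).2
    have hy := (y i).2
    exact abs_le.mpr (by constructor <;> omega)

section Module

variable {R ι : Type*} [AddCommGroup R] [Fintype ι] (b : Module.Basis ι ℤ R)

open Classical in
/-- The elements of a free `ℤ`-module whose coordinates in the basis `b` are at most `X` in absolute
value. -/
noncomputable def coordBox (X : ℕ) : Finset R :=
  (Fintype.piFinset fun _ : ι => Icc (-(X : ℤ)) X).map b.equivFun.symm.toEquiv.toEmbedding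

variable {b}

theorem mem_coordBox {X : ℕ} {z : R} : z ∈ coordBox b X ↔ ∀ i, |b.repr z i| ≤ X := by
  simp only [coordBox, mem_map_equiv, Fintype.mem_piFinset, mem_Icc, abs_le]
  rfl

theorem zero_mem_coordBox (X : ℕ) : 0 ∈ coordBox b X := by simp [mem_coordBox]

theorem basis_mem_coordBox (j : ι) : b j ∈ coordBox b 1 := by
  classical
  refine mem_coordBox.mpr fun i => ?_
  rw [b.repr_self, Finsupp.single_apply]
  split_ifs <;> simp

theorem add_mem_coordBox {X Y : ℕ} {x y : R} (hx : x ∈ coordBox b X) (hy : y ∈ coordBox b Y) :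
    x + y ∈ coordBox b (X + Y) := by
  refine mem_coordBox.mpr fun i => ?_
  rw [map_add, Finsupp.add_apply, Nat.cast_add]
  exact (abs_add_le _ _).trans (add_le_add (mem_coordBox.mp hx i) (mem_coordBox.mp hy i))

theorem sub_mem_coordBox {X Y : ℕ} {x y : R} (hx : x ∈ coordBox b X) (hy : y ∈ coordBox b Y) :
    x - y ∈ coordBox b (X + Y) := by
  refine mem_coordBox.mpr fun i => ?_
  rw [map_sub, Finsupp.sub_apply, Nat.cast_add]
  exact (abs_sub _ _).trans (add_le_add (mem_coordBox.mp hx i) (mem_coordBox.mp hy i))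

variable (b)

theorem card_coordBox (X : ℕ) : #(coordBox b X) = (2 * X + 1) ^ Fintype.card ι := by
  simp only [coordBox, card_map, Fintype.card_piFinset, Int.card_Icc, prod_const, card_univ]
  congr 1
  lia

end Module

section Ring

variable {R ι : Type*} [CommRing R] [Fintype ι] (b : Module.Basis ι ℤ R)

theorem exists_mul_mem_coordBox : ∃ C : ℕ, ∀ X Y : ℕ, ∀ x ∈ coordBox b X, ∀ y ∈ coordBox b Y,
    x * y ∈ coordBox b (C * X * Y) := by
  let c : ι → ι → ι → ℤ := fun i j k => b.repr (b j * b k) i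
  refine ⟨∑ i, ∑ j, ∑ k, (c i j k).natAbs, fun X Y x hx y hy => mem_coordBox.mpr fun i => ?_⟩
  have repr_mul : b.repr (x * y) i = ∑ j, ∑ k, b.repr x j * b.repr y k * c i j k := by
    conv_lhs => rw [← b.sum_repr x, ← b.sum_repr y, sum_mul_sum]
    simp only [smul_mul_smul_comm, map_sum, map_smul, Finsupp.coe_finsetSum, Finset.sum_apply,
      Finsupp.smul_apply, smul_eq_mul, c]
  calc |b.repr (x * y) i|
      ≤ ∑ j, ∑ k, |b.repr x j * b.repr y k * c i j k| := repr_mul ▸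
        (abs_sum_le_sum_abs _ _).trans (sum_le_sum fun j _ => abs_sum_le_sum_abs _ _)
    _ ≤ ∑ j, ∑ k, (X : ℤ) * Y * |c i j k| := by
        gcongr with j _ k _
        rw [abs_mul, abs_mul]
        gcongr
        exacts [mem_coordBox.mp hx j, mem_coordBox.mp hy k]
    _ = (X : ℤ) * Y * ∑ j, ∑ k, |c i j k| := by simp only [mul_sum]
    _ ≤ (X : ℤ) * Y * ∑ i, ∑ j, ∑ k, |c i j k| := by
        exact mul_le_mul_of_nonneg_left (single_le_sum (f := fun i => ∑ j, ∑ k, |c i j k|)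
          (fun i _ => by positivity) (mem_univ i)) (by positivity)
    _ = _ := by push_cast; ring

theorem exists_natAbs_norm_le : ∃ C : ℕ, 0 < C ∧ ∀ X : ℕ, ∀ x ∈ coordBox b X,
    (Algebra.norm ℤ x).natAbs ≤ C * X ^ Fintype.card ι := by
  classical
  obtain ⟨C, hC⟩ := exists_mul_mem_coordBox b
  refine ⟨(Fintype.card ι).factorial * (C + 1) ^ Fintype.card ι, by positivity, fun X x hx => ?_⟩
  have entry_le : ∀ i j, |Algebra.leftMulMatrix b x i j| ≤ ((C + 1 : ℕ) : ℤ) * X := fun i j => by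
    rw [Algebra.leftMulMatrix_eq_repr_mul]
    refine (mem_coordBox.mp (hC X 1 x hx (b j) (basis_mem_coordBox j)) i).trans ?_
    push_cast
    nlinarith [Nat.zero_le X]
  have det_le := Matrix.det_le (abv := AbsoluteValue.abs) entry_le
  rw [← Algebra.norm_eq_matrix_det, AbsoluteValue.abs_apply, nsmul_eq_mul] at det_le
  zify
  exact det_le.trans_eq (by push_cast; rw [mul_pow]; ring)

variable {b} in
theorem exists_quotient_section_mem_coordBox {I : Ideal R} {D : ℕ}
    (h : ∀ z : R, ∃ q ∈ coordBox b D, z - q ∈ I) :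
    ∃ q : R ⧸ I → R, ∀ a, q a ∈ coordBox b D ∧ Ideal.Quotient.mk I (q a) = a := by
  choose q hqD hqI using h
  exact ⟨fun a => q a.out, fun a => ⟨hqD _, by
    rw [← Ideal.Quotient.eq.mpr (hqI _), Ideal.Quotient.mk_out]⟩⟩

variable [IsDedekindDomain R] [Module.Free ℤ R]

section Count

variable {b} {I : Ideal R} [DecidablePred (· ∈ I)] {D : ℕ} [Finite (R ⧸ I)]

theorem absNorm_mul_card_coordBox_le (h : ∀ z : R, ∃ q ∈ coordBox b D, z - q ∈ I) (X : ℕ) :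
    Ideal.absNorm I * #{z ∈ coordBox b X | z ∈ I} ≤ (2 * (X + D) + 1) ^ Fintype.card ι := by
  have := Fintype.ofFinite (R ⧸ I)
  obtain ⟨q, hq⟩ := exists_quotient_section_mem_coordBox h
  rw [Ideal.absNorm_apply, Submodule.cardQuot_apply, Nat.card_eq_fintype_card,
    ← card_univ (α := R ⧸ I), ← card_product, ← card_coordBox b]
  refine card_le_card_of_injOn (fun p : (R ⧸ I) × R => p.2 + q p.1) ?_ ?_
  · rintro ⟨a, z⟩ hp
    have hz := (mem_filter.mp (mem_product.mp hp).2).1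
    exact add_mem_coordBox hz (hq a).1
  · have mk_add : ∀ p : (R ⧸ I) × R, p ∈ (univ : Finset (R ⧸ I)) ×ˢ {z ∈ coordBox b X | z ∈ I} →
        Ideal.Quotient.mk I (p.2 + q p.1) = p.1 := fun p hp => by
      rw [map_add, (hq p.1).2, Ideal.Quotient.eq_zero_iff_mem.mpr
        (mem_filter.mp (mem_product.mp hp).2).2, zero_add]
    intro p hp p' hp' he
    have h1 : p.1 = p'.1 := by
      rw [← mk_add p hp, ← mk_add p' hp']
      exact congrArg _ he
    exact Prod.ext h1 (add_right_cancel (b := q p.1) (by simpa only [h1] using he))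

theorem le_absNorm_mul_card_coordBox (h : ∀ z : R, ∃ q ∈ coordBox b D, z - q ∈ I) (X : ℕ) :
    (2 * (X - D) + 1) ^ Fintype.card ι ≤ Ideal.absNorm I * #{z ∈ coordBox b X | z ∈ I} := by
  have := Fintype.ofFinite (R ⧸ I)
  obtain ⟨q, hq⟩ := exists_quotient_section_mem_coordBox h
  rw [Ideal.absNorm_apply, Submodule.cardQuot_apply, Nat.card_eq_fintype_card,
    ← card_univ (α := R ⧸ I), ← card_product, ← card_coordBox b]
  rcases le_total D X with hDX | hXD
  · refine card_le_card_of_injOn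
      (fun z => (Ideal.Quotient.mk I z, z - q (Ideal.Quotient.mk I z))) ?_ ?_
    · intro z hz
      have hbox := sub_mem_coordBox hz (hq (Ideal.Quotient.mk I z)).1
      rw [Nat.sub_add_cancel hDX] at hbox
      simpa [hbox] using Ideal.Quotient.eq.mp (hq (Ideal.Quotient.mk I z)).2.symm
    · intro z _ z' _ he
      obtain ⟨h1, h2⟩ := Prod.mk.inj he
      rw [h1] at h2
      exact sub_left_injective h2
  · rw [Nat.sub_eq_zero_of_le hXD, card_coordBox, mul_zero, zero_add, one_pow]
    exact card_pos.mpr ⟨(0, 0), by simp [zero_mem_coordBox]⟩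

theorem abs_absNorm_mul_card_coordBox_sub_le (h : ∀ z : R, ∃ q ∈ coordBox b D, z - q ∈ I)
    (X : ℕ) :
    |(Ideal.absNorm I : ℝ) * #{z ∈ coordBox b X | z ∈ I} - (2 * X + 1) ^ Fintype.card ι| ≤
      2 * D * Fintype.card ι * (2 * (X + D) + 1) ^ (Fintype.card ι - 1) := by
  have pow_diff_le : ∀ x : ℝ, 0 ≤ x → |x - (2 * X + 1)| ≤ 2 * D →
      |x ^ Fintype.card ι - (2 * X + 1) ^ Fintype.card ι| ≤
        2 * D * Fintype.card ι * (2 * (X + D) + 1) ^ (Fintype.card ι - 1) := fun x hx hxD => by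
    refine (abs_pow_sub_pow_le x (2 * X + 1) _).trans ?_
    have : x ≤ 2 * (X + D) + 1 := by linarith [(abs_le.mp hxD).2]
    gcongr
    rw [abs_of_nonneg hx, abs_of_nonneg (by positivity)]
    exact max_le this (by linarith [(Nat.cast_nonneg D : (0 : ℝ) ≤ D)])
  have upper : (Ideal.absNorm I : ℝ) * #{z ∈ coordBox b X | z ∈ I} ≤
      (2 * (X + D) + 1) ^ Fintype.card ι := by exact_mod_cast absNorm_mul_card_coordBox_le h X
  have lower : (2 * ((X - D : ℕ) : ℝ) + 1) ^ Fintype.card ι ≤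
      Ideal.absNorm I * #{z ∈ coordBox b X | z ∈ I} := by
    exact_mod_cast le_absNorm_mul_card_coordBox h X
  have hsub : (X : ℝ) ≤ (X - D : ℕ) + D ∧ ((X - D : ℕ) : ℝ) ≤ X := by
    have : X ≤ (X - D) + D ∧ X - D ≤ X := ⟨le_tsub_add, tsub_le_self⟩
    exact_mod_cast this
  have up := pow_diff_le (2 * (X + D) + 1) (by positivity) (by
    rw [abs_of_nonneg] <;> linarith [(Nat.cast_nonneg D : (0 : ℝ) ≤ D)])
  have low := pow_diff_le (2 * ((X - D : ℕ) : ℝ) + 1) (by positivity)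
    (abs_le.mpr ⟨by linarith, by linarith⟩)
  exact abs_le.mpr ⟨by linarith [(abs_le.mp low).1], by linarith [(abs_le.mp up).2]⟩

end Count

variable [Module.Finite ℤ R]

-- A multiple `D = β * β'` of `β` is an integer; round the coordinates of `β' * z / D`.
theorem exists_sub_mul_mem_coordBox : ∃ C : ℕ, 0 < C ∧ ∀ M : ℕ, ∀ β ∈ coordBox b M, β ≠ 0 →
    ∀ z : R, ∃ u : R, z - β * u ∈ coordBox b (C * M) := by
  obtain ⟨C, hC⟩ := exists_mul_mem_coordBox b
  refine ⟨C + 1, by positivity, fun M β hM hβ z => ?_⟩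
  obtain ⟨D, hD, β', hβ'⟩ : ∃ D : ℕ, D ≠ 0 ∧ ∃ β' : R, (D : R) = β * β' :=
    ⟨Ideal.absNorm (Ideal.span {β}), by simpa [Ideal.absNorm_eq_zero_iff] using hβ,
      Ideal.mem_span_singleton.mp (Ideal.absNorm_mem _)⟩
  have hD' : (0 : ℤ) < D := by positivity
  let u : R := b.equivFun.symm fun i => b.repr (β' * z) i / (D : ℤ)
  have repr_u : ∀ i, b.repr u i = b.repr (β' * z) i / (D : ℤ) := fun i =>
    congrFun (b.equivFun.apply_symm_apply _) i
  have remainder_mem : β' * z - (D : ℤ) • u ∈ coordBox b D := mem_coordBox.mpr fun i => by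
    rw [map_sub, map_smul, Finsupp.sub_apply, Finsupp.smul_apply, repr_u, smul_eq_mul,
      ← Int.emod_def, abs_of_nonneg (Int.emod_nonneg _ hD'.ne')]
    exact (Int.emod_lt_of_pos _ hD').le
  refine ⟨u, mem_coordBox.mpr fun i => ?_⟩
  have mul_remainder : β * (β' * z - (D : ℤ) • u) = (D : ℤ) • (z - β * u) := by
    simp only [zsmul_eq_mul, Int.cast_natCast]
    linear_combination - z * hβ'
  have bound := mem_coordBox.mp (hC M D β hM _ remainder_mem) i
  rw [mul_remainder, map_smul, Finsupp.smul_apply, smul_eq_mul, abs_mul, abs_of_pos hD'] at bound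
  push_cast at bound ⊢
  nlinarith

variable {b} in
theorem exists_mem_ne_zero_mem_coordBox {I : Ideal R} (hI : I ≠ ⊥) (M : ℕ)
    (hM : Ideal.absNorm I < (M + 1) ^ Fintype.card ι) : ∃ β ∈ I, β ≠ 0 ∧ β ∈ coordBox b M := by
  have : Finite (R ⧸ I) := Ideal.finiteQuotientOfFreeOfNeBot I hI
  obtain ⟨v, hv0, hv, hvI⟩ := exists_ne_zero_abs_le_map_eq_zero
    ((Ideal.Quotient.mk I).toAddMonoidHom.comp b.equivFun.symm.toAddEquiv.toAddMonoidHom) M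
    (by simpa [Ideal.absNorm_apply, Submodule.cardQuot_apply] using hM)
  refine ⟨b.equivFun.symm v, Ideal.Quotient.eq_zero_iff_mem.mp hvI,
    (LinearEquiv.map_ne_zero_iff _).mpr hv0, mem_coordBox.mpr fun i => ?_⟩
  rw [show b.repr (b.equivFun.symm v) i = v i from congrFun (b.equivFun.apply_symm_apply v) i]
  exact hv i

theorem exists_mem_coordBox_sub_mem_ideal : ∃ C : ℕ, 0 < C ∧ ∀ I : Ideal R, I ≠ ⊥ → ∀ M : ℕ,
    Ideal.absNorm I < (M + 1) ^ Fintype.card ι → ∀ z : R, ∃ q ∈ coordBox b (C * M), z - q ∈ I := by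
  obtain ⟨C, hC0, hC⟩ := exists_sub_mul_mem_coordBox b
  refine ⟨C, hC0, fun I hI M hM z => ?_⟩
  obtain ⟨β, hβI, hβ0, hβ⟩ := exists_mem_ne_zero_mem_coordBox hI M hM
  obtain ⟨u, hu⟩ := hC M β hβ hβ0 z
  exact ⟨z - β * u, hu, by simpa using I.mul_mem_right u hβI⟩

theorem exists_abs_absNorm_mul_card_coordBox_sub_le [Nonempty ι] {A : ℝ} (hA : 0 ≤ A) :
    ∃ C : ℝ, 0 ≤ C ∧ ∀ (I : Ideal R) [DecidablePred (· ∈ I)], I ≠ ⊥ → ∀ X : ℕ, 1 ≤ X →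
      (Ideal.absNorm I : ℝ) ≤ A * X ^ Fintype.card ι →
      |(Ideal.absNorm I : ℝ) * #{z ∈ coordBox b X | z ∈ I} - (2 * X + 1) ^ Fintype.card ι| ≤
        C * (Ideal.absNorm I : ℝ) ^ (Fintype.card ι : ℝ)⁻¹ * X ^ (Fintype.card ι - 1) := by
  obtain ⟨C, -, hC⟩ := exists_mem_coordBox_sub_mem_ideal b
  have hn : Fintype.card ι ≠ 0 := Fintype.card_ne_zero
  set n := Fintype.card ι
  refine ⟨2 * C * n * (2 * (1 + C * A ^ (n : ℝ)⁻¹) + 1) ^ (n - 1), by positivity,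
    fun I _ hI X hX hN => ?_⟩
  have : Finite (R ⧸ I) := Ideal.finiteQuotientOfFreeOfNeBot I hI
  set ν : ℝ := (Ideal.absNorm I : ℝ) ^ (n : ℝ)⁻¹
  have hνX : ν ≤ A ^ (n : ℝ)⁻¹ * X := by
    rw [← Real.pow_rpow_inv_natCast (Nat.cast_nonneg X) hn, ← Real.mul_rpow hA (by positivity)]
    exact Real.rpow_le_rpow (by positivity) hN (by positivity)
  have absNorm_lt : Ideal.absNorm I < (⌊ν⌋₊ + 1) ^ n := by
    have : (Ideal.absNorm I : ℝ) < (⌊ν⌋₊ + 1) ^ n := by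
      rw [← Real.rpow_inv_natCast_pow (Nat.cast_nonneg (Ideal.absNorm I)) hn]
      exact pow_lt_pow_left₀ (Nat.lt_floor_add_one ν) (by positivity) hn
    exact_mod_cast this
  have floor_le : ((C * ⌊ν⌋₊ : ℕ) : ℝ) ≤ C * ν := by
    push_cast
    gcongr
    exact Nat.floor_le (by positivity)
  have hX1 : (1 : ℝ) ≤ X := by exact_mod_cast hX
  calc _ ≤ 2 * ((C * ⌊ν⌋₊ : ℕ) : ℝ) * n * (2 * (X + (C * ⌊ν⌋₊ : ℕ)) + 1) ^ (n - 1) :=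
        abs_absNorm_mul_card_coordBox_sub_le (hC I hI _ absNorm_lt) X
    _ ≤ 2 * (C * ν) * n * (2 * (X + C * (A ^ (n : ℝ)⁻¹ * X)) + X) ^ (n - 1) := by
        gcongr
        exact floor_le.trans (by gcongr)
    _ = _ := by rw [show 2 * (X + C * (A ^ (n : ℝ)⁻¹ * X)) + X =
        (2 * (1 + C * A ^ (n : ℝ)⁻¹) + 1) * (X : ℝ) by ring, mul_pow]; ring

end Ring

end CoordBox

section PartialSums

open Finset

theorem sum_Icc_mul_le_sum_Icc_mul {a b w : ℕ → ℝ}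
    (hab : ∀ m, ∑ k ∈ Icc 1 m, a k ≤ ∑ k ∈ Icc 1 m, b k)
    (hw : ∀ k, 1 ≤ k → w (k + 1) ≤ w k) (hw0 : ∀ k, 0 ≤ w k) (Y : ℕ) :
    ∑ k ∈ Icc 1 Y, a k * w k ≤ ∑ k ∈ Icc 1 Y, b k * w k := by
  have abel : w Y * (∑ k ∈ Icc 1 Y, b k - ∑ k ∈ Icc 1 Y, a k) ≤
      ∑ k ∈ Icc 1 Y, b k * w k - ∑ k ∈ Icc 1 Y, a k * w k := by
    induction Y with
    | zero => simp
    | succ Y ih =>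
      simp only [sum_Icc_succ_top (Nat.le_add_left 1 Y)]
      rcases Nat.eq_zero_or_pos Y with rfl | hY
      · simp only [zero_lt_one, Icc_eq_empty_of_lt, sum_empty, zero_add]
        linarith
      · have := mul_le_mul_of_nonneg_right (hw Y hY) (sub_nonneg.mpr (hab Y))
        linarith
  linarith [mul_nonneg (hw0 Y) (sub_nonneg.mpr (hab Y))]

theorem abs_sum_Icc_mul_le {a w : ℕ → ℝ} {B : ℝ} (ha : ∀ m, |∑ k ∈ Icc 1 m, a k| ≤ B)
    (hw : ∀ k, 1 ≤ k → w (k + 1) ≤ w k) (hw0 : ∀ k, 0 ≤ w k) (Y : ℕ) :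
    |∑ k ∈ Icc 1 Y, a k * w k| ≤ B * w 1 := by
  have hB : 0 ≤ B := (abs_nonneg _).trans (ha 0)
  rcases Nat.eq_zero_or_pos Y with rfl | hY
  · simpa using mul_nonneg hB (hw0 1)
  have abel : |∑ k ∈ Icc 1 Y, a k * w k - w Y * ∑ k ∈ Icc 1 Y, a k| ≤ B * (w 1 - w Y) := by
    induction Y, hY using Nat.le_induction with
    | base => simp [mul_comm]
    | succ Y hY ih =>
      simp only [sum_Icc_succ_top (Nat.le_add_left 1 Y)]
      calc _ = |(∑ k ∈ Icc 1 Y, a k * w k - w Y * ∑ k ∈ Icc 1 Y, a k) +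
              (w Y - w (Y + 1)) * ∑ k ∈ Icc 1 Y, a k| := by congr 1; ring
        _ ≤ B * (w 1 - w Y) + (w Y - w (Y + 1)) * B := by
            refine (abs_add_le _ _).trans (add_le_add ih ?_)
            rw [abs_mul, abs_of_nonneg (sub_nonneg.mpr (hw Y hY))]
            exact mul_le_mul_of_nonneg_left (ha Y) (sub_nonneg.mpr (hw Y hY))
        _ = B * (w 1 - w (Y + 1)) := by ring
  have last : |w Y * ∑ k ∈ Icc 1 Y, a k| ≤ w Y * B := by
    rw [abs_mul, abs_of_nonneg (hw0 Y)]
    exact mul_le_mul_of_nonneg_left (ha Y) (hw0 Y)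
  rw [abs_le] at abel last ⊢
  constructor <;> linarith

-- Bernoulli: `(Y / (Y + 1)) ^ r ≤ 1 - r / (Y + 1)`.
theorem sum_rpow_div_self_le {r : ℝ} (hr0 : 0 < r) (hr1 : r ≤ 1) (Y : ℕ) :
    ∑ k ∈ Icc 1 Y, (k : ℝ) ^ r / k ≤ (Y : ℝ) ^ r / r := by
  induction Y with
  | zero => simp [Real.zero_rpow hr0.ne']
  | succ Y ih =>
    rw [sum_Icc_succ_top (Nat.le_add_left 1 Y)]
    have hY : (0 : ℝ) < (Y + 1 : ℕ) := by positivity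
    have bernoulli : ((Y : ℝ) / (Y + 1 : ℕ)) ^ r ≤ 1 - r / (Y + 1 : ℕ) := by
      have h := rpow_one_add_le_one_add_mul_self (s := -(1 / ((Y + 1 : ℕ) : ℝ))) (p := r)
        (by rw [neg_le_neg_iff, div_le_one hY]; push_cast; linarith [Nat.cast_nonneg (α := ℝ) Y])
        hr0.le hr1
      rwa [show 1 + -(1 / ((Y + 1 : ℕ) : ℝ)) = Y / (Y + 1 : ℕ) by field_simp; push_cast; ring,
        mul_neg, mul_one_div, ← sub_eq_add_neg] at h
    rw [Real.div_rpow (by positivity) hY.le, div_le_iff₀ (by positivity)] at bernoulli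
    calc _ ≤ (Y : ℝ) ^ r / r + ((Y + 1 : ℕ) : ℝ) ^ r / (Y + 1 : ℕ) := by gcongr
      _ ≤ (1 - r / (Y + 1 : ℕ)) * ((Y + 1 : ℕ) : ℝ) ^ r / r +
          ((Y + 1 : ℕ) : ℝ) ^ r / (Y + 1 : ℕ) := by gcongr
      _ = _ := by field_simp; ring

theorem exists_le_mul_pow_le {A Y : ℕ} (hA : 0 < A) {n : ℕ} (hn : n ≠ 0) (hY : 0 < Y) :
    ∃ X, Y ≤ A * X ^ n ∧ A * X ^ n ≤ A * 2 ^ n * Y := by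
  classical
  have exists_le : ∃ X, Y ≤ A * X ^ n :=
    ⟨Y, (Nat.le_self_pow hn Y).trans (Nat.le_mul_of_pos_left _ hA)⟩
  refine ⟨Nat.find exists_le, Nat.find_spec exists_le, ?_⟩
  rcases hX : Nat.find exists_le with _ | _ | X
  · simp [hn]
  · rw [zero_add, one_pow, mul_assoc]
    exact Nat.mul_le_mul_left A (Nat.mul_pos (by positivity) hY)
  · have hlt : A * (X + 1) ^ n < Y := not_le.mp (Nat.find_min exists_le (by lia))
    calc A * (X + 1 + 1) ^ n ≤ A * (2 * (X + 1)) ^ n := by gcongr; lia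
      _ = 2 ^ n * (A * (X + 1) ^ n) := by rw [mul_pow]; ring
      _ ≤ 2 ^ n * Y := by gcongr
      _ ≤ A * 2 ^ n * Y := by
          rw [mul_assoc]
          exact Nat.le_mul_of_pos_left _ hA

theorem abs_sum_Icc_sub_sum_Icc_le {a c : ℕ → ℝ} {C : ℝ} (hc : ∀ k, 0 ≤ c k)
    (hcount : ∀ Y, ∑ k ∈ Icc 1 Y, c k ≤ C * Y) (hac : ∀ k, |a k| ≤ c k / k) {Y Z : ℕ}
    (hY : 0 < Y) (hYZ : Y ≤ Z) :
    |∑ k ∈ Icc 1 Z, a k - ∑ k ∈ Icc 1 Y, a k| ≤ C * (Z / Y) := by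
  have hsub : Icc 1 Y ⊆ Icc 1 Z := Icc_subset_Icc_right hYZ
  rw [← sum_sdiff_eq_sub hsub]
  have term_le : ∀ k ∈ Icc 1 Z \ Icc 1 Y, |a k| ≤ c k / Y := fun k hk => by
    simp only [mem_sdiff, mem_Icc, not_and, not_le] at hk
    refine (hac k).trans ?_
    gcongr
    · exact hc k
    · exact (hk.2 hk.1.1).le
  calc _ ≤ ∑ k ∈ Icc 1 Z \ Icc 1 Y, c k / Y := (abs_sum_le_sum_abs _ _).trans (sum_le_sum term_le)
    _ ≤ ∑ k ∈ Icc 1 Z, c k / Y := sum_le_sum_of_subset_of_nonneg sdiff_subset fun k _ _ =>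
        div_nonneg (hc k) (Nat.cast_nonneg Y)
    _ = (∑ k ∈ Icc 1 Z, c k) / Y := (sum_div ..).symm
    _ ≤ C * Z / Y := by gcongr; exact hcount Z
    _ = _ := mul_div_assoc ..

theorem exists_abs_sum_Icc_le {a c : ℕ → ℝ} {C B : ℝ} (hc : ∀ k, 0 ≤ c k)
    (hcount : ∀ Y, ∑ k ∈ Icc 1 Y, c k ≤ C * Y) (hac : ∀ k, |a k| ≤ c k / k) {A n : ℕ}
    (hA : 0 < A) (hn : n ≠ 0) (hB : ∀ X : ℕ, |∑ k ∈ Icc 1 (A * X ^ n), a k| ≤ B) :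
    ∃ B' : ℝ, ∀ Y, |∑ k ∈ Icc 1 Y, a k| ≤ B' := by
  have hC : 0 ≤ C := by simpa using (sum_nonneg fun k _ => hc k).trans (hcount 1)
  refine ⟨B + C * (A * 2 ^ n), fun Y => ?_⟩
  rcases Nat.eq_zero_or_pos Y with rfl | hY
  · have hB0 : 0 ≤ B := (abs_nonneg _).trans (hB 0)
    simp only [zero_lt_one, Icc_eq_empty_of_lt, sum_empty, abs_zero]
    positivity
  obtain ⟨X, hYX, hXY⟩ := exists_le_mul_pow_le hA hn hY
  have tail : |∑ k ∈ Icc 1 (A * X ^ n), a k - ∑ k ∈ Icc 1 Y, a k| ≤ C * (A * 2 ^ n) := by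
    refine (abs_sum_Icc_sub_sum_Icc_le hc hcount hac hY hYX).trans
      (mul_le_mul_of_nonneg_left ?_ hC)
    rw [div_le_iff₀ (by positivity)]
    exact_mod_cast hXY
  have := abs_sub_abs_le_abs_sub (∑ k ∈ Icc 1 Y, a k) (∑ k ∈ Icc 1 (A * X ^ n), a k)
  rw [abs_sub_comm] at this
  linarith [hB X]

end PartialSums

section IdealCount

open Finset NumberField Filter Topology

variable (F : Type*) [Field F] [NumberField F]

/-- The number of integral ideals of norm `k`; these are the coefficients of the Dedekind zeta
function of `F`. -/
noncomputable abbrev idealCount (k : ℕ) : ℕ := Nat.card {I : Ideal (𝓞 F) // Ideal.absNorm I = k}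

open Classical in
/-- The nonzero integral ideals of norm at most `Y`. -/
noncomputable def idealsNormLE (Y : ℕ) : Finset (Ideal (𝓞 F)) :=
  {I ∈ (Ideal.finite_setOfPred_absNorm_le (S := 𝓞 F) Y).toFinset | I ≠ ⊥}

variable {F}

theorem mem_idealsNormLE {Y : ℕ} {I : Ideal (𝓞 F)} :
    I ∈ idealsNormLE F Y ↔ Ideal.absNorm I ≤ Y ∧ I ≠ ⊥ := by
  simp [idealsNormLE]

theorem absNorm_ne_zero_of_mem_idealsNormLE {Y : ℕ} {I : Ideal (𝓞 F)} (hI : I ∈ idealsNormLE F Y) :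
    Ideal.absNorm I ≠ 0 :=
  Ideal.absNorm_eq_zero_iff.not.mpr (mem_idealsNormLE.mp hI).2

variable (F)

theorem sum_idealsNormLE (Y : ℕ) (g : ℕ → ℝ) :
    ∑ I ∈ idealsNormLE F Y, g (Ideal.absNorm I) = ∑ k ∈ Icc 1 Y, idealCount F k * g k := by
  classical
  rw [← sum_fiberwise_of_maps_to (g := Ideal.absNorm) (t := Icc 1 Y) fun I hI =>
    mem_Icc.mpr ⟨Nat.one_le_iff_ne_zero.mpr (absNorm_ne_zero_of_mem_idealsNormLE hI),
      (mem_idealsNormLE.mp hI).1⟩]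
  refine sum_congr rfl fun k hk => ?_
  obtain ⟨hk1, hkY⟩ := mem_Icc.mp hk
  have hcard : #{I ∈ idealsNormLE F Y | Ideal.absNorm I = k} = idealCount F k := by
    refine (Nat.subtype_card _ fun I => ?_).symm
    rw [mem_filter, mem_idealsNormLE]
    refine ⟨fun h => h.2, fun h => ⟨⟨h.trans_le hkY, ?_⟩, h⟩⟩
    rintro rfl
    rw [Ideal.absNorm_bot] at h
    lia
  rw [sum_congr rfl fun I hI => congrArg g (mem_filter.mp hI).2, sum_const, nsmul_eq_mul, hcard]

theorem exists_sum_idealCount_le : ∃ C : ℝ, ∀ Y, ∑ k ∈ Icc 1 Y, (idealCount F k : ℝ) ≤ C * Y := by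
  obtain ⟨C, hC⟩ := ((Ideal.tendsto_norm_le_div_atTop₀ F).comp
    (tendsto_natCast_atTop_atTop (R := ℝ))).bddAbove_range
  refine ⟨C, fun Y => ?_⟩
  rcases Nat.eq_zero_or_pos Y with rfl | hY
  · simp
  have card_le := hC ⟨Y, rfl⟩
  rw [Function.comp_apply, div_le_iff₀ (by positivity)] at card_le
  refine le_trans (le_of_eq ?_) card_le
  have card_eq : (#(idealsNormLE F Y) : ℝ) = ∑ k ∈ Icc 1 Y, (idealCount F k : ℝ) := by
    simpa using sum_idealsNormLE F Y fun _ => 1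
  rw [← card_eq, Nat.cast_inj, ← Nat.card_eq_finsetCard]
  refine Nat.card_congr
    { toFun := fun I => ⟨⟨I.1, mem_nonZeroDivisors_of_ne_zero (mem_idealsNormLE.mp I.2).2⟩, ?_⟩
      invFun := fun I => ⟨I.1.1, mem_idealsNormLE.mpr ⟨?_, nonZeroDivisors.coe_ne_zero I.1⟩⟩
      left_inv := fun I => rfl
      right_inv := fun I => rfl }
  · exact_mod_cast (mem_idealsNormLE.mp I.2).1
  · exact_mod_cast I.2

variable {F} in
theorem tendsto_sum_idealsNormLE {f : Ideal (𝓞 F) → ℝ} (h0 : f ⊥ = 0) (hf : Summable f) :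
    Tendsto (fun Y => ∑ I ∈ idealsNormLE F Y, f I) atTop (𝓝 (∑' I, f I)) := by
  classical
  have mem_insert : ∀ {Y : ℕ} {I : Ideal (𝓞 F)}, I ∈ insert ⊥ (idealsNormLE F Y) ↔
      I = ⊥ ∨ Ideal.absNorm I ≤ Y := by
    intro Y I
    rw [Finset.mem_insert, mem_idealsNormLE]
    tauto
  have exhaust : Tendsto (fun Y => insert ⊥ (idealsNormLE F Y)) atTop atTop :=
    tendsto_atTop_finset_of_monotone
      (fun Y Z hYZ I hI => mem_insert.mpr ((mem_insert.mp hI).imp_right hYZ.trans'))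
      fun I => ⟨Ideal.absNorm I, mem_insert.mpr (Or.inr le_rfl)⟩
  exact (hf.hasSum.comp exhaust).congr fun Y => sum_insert_zero h0

theorem summable_idealCount_mul_rpow {s : ℝ} (hs : 1 < s) :
    Summable fun k : ℕ => (idealCount F k : ℝ) * (k : ℝ) ^ (-s) := by
  obtain ⟨C, hC⟩ := exists_sum_idealCount_le F
  have bigO : (fun n => ∑ k ∈ Icc 1 n, (idealCount F k : ℝ)) =O[atTop]
      fun n => (n : ℝ) ^ (1 : ℝ) := by
    refine Asymptotics.IsBigO.of_bound C (Eventually.of_forall fun Y => ?_)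
    rw [Real.rpow_one, Real.norm_of_nonneg (by positivity), Real.norm_of_nonneg (by positivity)]
    exact hC Y
  have h := (LSeriesSummable_of_sum_norm_bigO_and_nonneg (s := s) bigO
    (fun _ => Nat.cast_nonneg _) zero_le_one (by simpa using hs)).norm
  refine h.congr fun k => ?_
  rcases Nat.eq_zero_or_pos k with rfl | hk
  · simp [Real.zero_rpow (by linarith : -s ≠ 0)]
  · simp [hk.ne', Real.rpow_neg, div_eq_mul_inv]

variable {F} in
theorem hasSum_fiber_absNorm_rpow (s : ℝ) (k : ℕ) :
    HasSum (fun I : {I : Ideal (𝓞 F) // Ideal.absNorm I = k} => (Ideal.absNorm I.1 : ℝ) ^ (-s))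
      (idealCount F k * (k : ℝ) ^ (-s)) := by
  have : Finite {I : Ideal (𝓞 F) // Ideal.absNorm I = k} :=
    (Ideal.finite_setOfPred_absNorm_eq k).to_subtype
  have := Fintype.ofFinite {I : Ideal (𝓞 F) // Ideal.absNorm I = k}
  have h := hasSum_fintype fun I : {I : Ideal (𝓞 F) // Ideal.absNorm I = k} =>
    (Ideal.absNorm I.1 : ℝ) ^ (-s)
  rwa [sum_congr rfl fun I _ => by rw [I.2], sum_const, nsmul_eq_mul, card_univ,
    ← Nat.card_eq_fintype_card] at h

theorem summable_absNorm_rpow {s : ℝ} (hs : 1 < s) :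
    Summable fun I : Ideal (𝓞 F) => (Ideal.absNorm I : ℝ) ^ (-s) := by
  rw [← (Equiv.sigmaFiberEquiv (Ideal.absNorm (S := 𝓞 F))).summable_iff,
    summable_sigma_of_nonneg fun _ => by dsimp only [Function.comp_apply]; positivity]
  exact ⟨fun k => (hasSum_fiber_absNorm_rpow s k).summable,
    (summable_idealCount_mul_rpow F hs).congr fun k => (hasSum_fiber_absNorm_rpow s k).tsum_eq.symm⟩

theorem dedekindZeta_eq_tsum {s : ℝ} (hs : 1 < s) :
    dedekindZeta F s = ((∑' I : Ideal (𝓞 F), (Ideal.absNorm I : ℝ) ^ (-s) : ℝ) : ℂ) := by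
  have hsum := (Equiv.sigmaFiberEquiv (Ideal.absNorm (S := 𝓞 F))).summable_iff.mpr
    (summable_absNorm_rpow F hs)
  have fiberwise := hsum.tsum_sigma
  simp only [Function.comp_apply] at fiberwise
  rw [← (Equiv.sigmaFiberEquiv (Ideal.absNorm (S := 𝓞 F))).tsum_eq, fiberwise,
    Complex.ofReal_tsum]
  refine tsum_congr fun k => ?_
  refine Eq.trans ?_ (congrArg Complex.ofReal (hasSum_fiber_absNorm_rpow s k).tsum_eq.symm)
  rcases Nat.eq_zero_or_pos k with rfl | hk
  · simp [Real.zero_rpow (by linarith : -s ≠ 0)]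
  · rw [LSeries.term_of_ne_zero hk.ne', Complex.ofReal_mul, Complex.ofReal_cpow (Nat.cast_nonneg _),
      Complex.ofReal_neg, Complex.cpow_neg, Complex.ofReal_natCast, Complex.ofReal_natCast,
      div_eq_mul_inv]

end IdealCount

section SignSum

open Finset NumberField

variable {F : Type*} [Field F] [NumberField F] {ρ : ℕ →*₀ ℝ} {J : Ideal (𝓞 F)}

-- `I ↦ (γ) / (I * J)` is an involution of the ideals `I` with `γ ∈ I * J`, and it reverses the sign
-- of `ρ (N I)`.
theorem sum_sign_absNorm_of_mem_mul_eq_zero (hρ : ∀ m, m ≠ 0 → |ρ m| = 1)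
    (hJ : ρ (Ideal.absNorm J) = -1) {γ : 𝓞 F} (hγ : γ ≠ 0)
    (hprin : ρ (Ideal.absNorm (Ideal.span {γ})) = 1) {Y : ℕ}
    (hY : Ideal.absNorm (Ideal.span {γ}) ≤ Y) [DecidablePred fun I => γ ∈ I * J] :
    ∑ I ∈ idealsNormLE F Y with γ ∈ I * J, ρ (Ideal.absNorm I) = 0 := by
  have hspan : Ideal.span {γ} ≠ ⊥ := by simpa using hγ
  have exists_cofactor : ∀ I ∈ {I ∈ idealsNormLE F Y | γ ∈ I * J},
      ∃ I', Ideal.span {γ} = I * J * I' := fun I hI =>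
    Ideal.dvd_iff_le.mpr ((Ideal.span_singleton_le_iff_mem _).mpr (mem_filter.mp hI).2)
  choose! g hg using exists_cofactor
  have cofactor_mem : ∀ I ∈ {I ∈ idealsNormLE F Y | γ ∈ I * J},
      g I ∈ {I ∈ idealsNormLE F Y | γ ∈ I * J} := by
    intro I hI
    have hdvd : g I * J ∣ Ideal.span {γ} := ⟨I, by rw [hg I hI]; ring⟩
    have hgI : g I ∣ Ideal.span {γ} := (dvd_mul_right _ _).trans hdvd
    refine mem_filter.mpr ⟨mem_idealsNormLE.mpr ⟨?_, ne_zero_of_dvd_ne_zero hspan hgI⟩, ?_⟩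
    · exact (Nat.le_of_dvd (Nat.pos_of_ne_zero (Ideal.absNorm_eq_zero_iff.not.mpr hspan))
        (map_dvd Ideal.absNorm hgI)).trans hY
    · exact (Ideal.span_singleton_le_iff_mem _).mp (Ideal.dvd_iff_le.mp hdvd)
  have sign_add : ∀ I ∈ {I ∈ idealsNormLE F Y | γ ∈ I * J},
      ρ (Ideal.absNorm I) + ρ (Ideal.absNorm (g I)) = 0 := by
    intro I hI
    have hmul : ρ (Ideal.absNorm I) * ρ (Ideal.absNorm (g I)) = -1 := by
      have h := hprin
      rw [hg I hI, map_mul, map_mul, map_mul, map_mul, hJ] at h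
      linarith
    have hsq : ρ (Ideal.absNorm I) ^ 2 = 1 := by
      rw [← sq_abs, hρ _ (absNorm_ne_zero_of_mem_idealsNormLE (mem_filter.mp hI).1), one_pow]
    linear_combination ρ (Ideal.absNorm I) * hmul - ρ (Ideal.absNorm (g I)) * hsq
  refine sum_involution (fun I _ => g I) sign_add (fun I hI h0 he => h0 ?_) cofactor_mem
    fun I hI => ?_
  · have := sign_add I hI
    rw [he] at this
    linarith
  · have hgg := hg _ (cofactor_mem I hI)
    have hne : g I * J ≠ ⊥ := fun h0 => hspan (by rw [hgg, h0, Ideal.bot_mul])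
    exact mul_left_cancel₀ hne (by rw [← hgg, hg I hI]; ring)

variable {ι : Type*} [Fintype ι] (b : Module.Basis ι ℤ (𝓞 F))

theorem sum_sign_mul_card_coordBox_eq (hρ : ∀ m, m ≠ 0 → |ρ m| = 1)
    (hJ : ρ (Ideal.absNorm J) = -1)
    (hprin : ∀ γ : 𝓞 F, γ ≠ 0 → ρ (Ideal.absNorm (Ideal.span {γ})) = 1) {X Y : ℕ}
    (hY : ∀ γ ∈ coordBox b X, (Algebra.norm ℤ γ).natAbs ≤ Y)
    [∀ I : Ideal (𝓞 F), DecidablePred (· ∈ I * J)] :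
    ∑ I ∈ idealsNormLE F Y, ρ (Ideal.absNorm I) * #{z ∈ coordBox b X | z ∈ I * J} =
      ∑ I ∈ idealsNormLE F Y, ρ (Ideal.absNorm I) := by
  classical
  have sum_erase : ∑ γ ∈ (coordBox b X).erase 0,
      ∑ I ∈ idealsNormLE F Y with γ ∈ I * J, ρ (Ideal.absNorm I) = 0 := by
    refine sum_eq_zero fun γ hγ => ?_
    obtain ⟨hγ0, hγX⟩ := mem_erase.mp hγ
    refine sum_sign_absNorm_of_mem_mul_eq_zero hρ hJ hγ0 (hprin γ hγ0) ?_
    rw [Ideal.absNorm_span_singleton]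
    exact hY γ hγX
  calc ∑ I ∈ idealsNormLE F Y, ρ (Ideal.absNorm I) * #{z ∈ coordBox b X | z ∈ I * J}
      = ∑ I ∈ idealsNormLE F Y, ∑ γ ∈ coordBox b X,
          if γ ∈ I * J then ρ (Ideal.absNorm I) else 0 := by
        refine sum_congr rfl fun I _ => ?_
        rw [← sum_filter, sum_const, nsmul_eq_mul, mul_comm]
    _ = ∑ γ ∈ coordBox b X, ∑ I ∈ idealsNormLE F Y with γ ∈ I * J, ρ (Ideal.absNorm I) := by
        rw [sum_comm]
        simp only [sum_filter]
    _ = ∑ I ∈ idealsNormLE F Y, ρ (Ideal.absNorm I) := by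
        rw [← add_sum_erase _ _ (zero_mem_coordBox X), sum_erase, add_zero,
          filter_true_of_mem fun I _ => zero_mem _]

variable (F) in
theorem exists_sum_rpow_absNorm_div_le {r : ℝ} (hr0 : 0 < r) (hr1 : r ≤ 1) :
    ∃ C, 0 ≤ C ∧ ∀ Y : ℕ,
      ∑ I ∈ idealsNormLE F Y, (Ideal.absNorm I : ℝ) ^ r / Ideal.absNorm I ≤ C * (Y : ℝ) ^ r := by
  obtain ⟨C, hC⟩ := exists_sum_idealCount_le F
  have hC0 : 0 ≤ C := by simpa using (sum_nonneg fun k _ => Nat.cast_nonneg _).trans (hC 1)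
  refine ⟨C / r, by positivity, fun Y => ?_⟩
  rw [sum_idealsNormLE F Y fun k => (k : ℝ) ^ r / k]
  have antitone : ∀ k : ℕ, 1 ≤ k →
      ((k + 1 : ℕ) : ℝ) ^ r / (k + 1 : ℕ) ≤ (k : ℝ) ^ r / k := fun k hk => by
    have hk0 : (0 : ℝ) < k := by positivity
    rw [← Real.rpow_sub_one hk0.ne', ← Real.rpow_sub_one (by positivity)]
    exact Real.rpow_le_rpow_of_nonpos hk0 (by simp) (by linarith)
  calc ∑ k ∈ Icc 1 Y, (idealCount F k : ℝ) * ((k : ℝ) ^ r / k)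
      ≤ ∑ k ∈ Icc 1 Y, C * ((k : ℝ) ^ r / k) :=
        sum_Icc_mul_le_sum_Icc_mul (fun m => (hC m).trans (by simp [mul_comm])) antitone
          (fun k => by positivity) Y
    _ ≤ C * ((Y : ℝ) ^ r / r) := by
        rw [← mul_sum]
        exact mul_le_mul_of_nonneg_left (sum_rpow_div_self_le hr0 hr1 Y) hC0
    _ = C / r * (Y : ℝ) ^ r := by ring

theorem abs_mul_sub_div_mul_div_le {ε a j x y E : ℝ} (hε : |ε| = 1) (ha : 0 < a) (hj : 0 < j)
    (h : |a * j * x - y| ≤ E) : |ε * x - y / j * (ε / a)| ≤ E / (a * j) := by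
  have haj : 0 < a * j := mul_pos ha hj
  rw [le_div_iff₀ haj]
  calc |ε * x - y / j * (ε / a)| * (a * j) = |ε * (a * j * x - y)| := by
        rw [← abs_of_pos haj, ← abs_mul, abs_of_pos haj]
        congr 1
        field_simp
    _ ≤ E := by rwa [abs_mul, hε, one_mul]

theorem exists_abs_sum_sign_mul_card_coordBox_sub_le [Nonempty ι] (hρ : ∀ m, m ≠ 0 → |ρ m| = 1)
    (hJ : J ≠ ⊥) {A : ℝ} (hA : 0 ≤ A) :
    ∃ C, ∀ [∀ I : Ideal (𝓞 F), DecidablePred (· ∈ I * J)], ∀ X Y : ℕ, 1 ≤ X →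
      (Y : ℝ) ≤ A * X ^ Fintype.card ι →
      |∑ I ∈ idealsNormLE F Y, ρ (Ideal.absNorm I) * #{z ∈ coordBox b X | z ∈ I * J} -
        (2 * X + 1) ^ Fintype.card ι / Ideal.absNorm J *
          ∑ I ∈ idealsNormLE F Y, ρ (Ideal.absNorm I) / Ideal.absNorm I| ≤
      C * X ^ Fintype.card ι := by
  set n := Fintype.card ι
  have hn0 : n ≠ 0 := Fintype.card_ne_zero
  set j : ℝ := (Ideal.absNorm J : ℝ)
  set r : ℝ := (n : ℝ)⁻¹ with hr
  have hj0 : 0 < j :=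
    Nat.cast_pos.mpr (Nat.pos_of_ne_zero (Ideal.absNorm_eq_zero_iff.not.mpr hJ))
  obtain ⟨C, hC0, hC⟩ := exists_abs_absNorm_mul_card_coordBox_sub_le b (mul_nonneg hA hj0.le)
  obtain ⟨D, hD0, hD⟩ := exists_sum_rpow_absNorm_div_le F (r := r) (by positivity)
    (inv_le_one_of_one_le₀ (by exact_mod_cast Nat.one_le_iff_ne_zero.mpr hn0))
  refine ⟨C * (j ^ r / j) * (D * A ^ r), fun X Y hX hYX => ?_⟩
  have term_le : ∀ I ∈ idealsNormLE F Y,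
      |ρ (Ideal.absNorm I) * #{z ∈ coordBox b X | z ∈ I * J} -
        (2 * X + 1) ^ n / j * (ρ (Ideal.absNorm I) / Ideal.absNorm I)| ≤
      C * (j ^ r / j) * X ^ (n - 1) * ((Ideal.absNorm I : ℝ) ^ r / Ideal.absNorm I) := by
    intro I hI
    obtain ⟨hIY, hI0⟩ := mem_idealsNormLE.mp hI
    have hNI0 := absNorm_ne_zero_of_mem_idealsNormLE hI
    have hNI : (0 : ℝ) < Ideal.absNorm I := by positivity
    have count := hC (I * J) (mul_ne_zero hI0 hJ) X hX (by
      rw [map_mul, Nat.cast_mul, mul_right_comm]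
      exact mul_le_mul_of_nonneg_right ((Nat.cast_le.mpr hIY).trans hYX) hj0.le)
    rw [map_mul, Nat.cast_mul, Real.mul_rpow hNI.le hj0.le] at count
    exact (abs_mul_sub_div_mul_div_le (hρ _ hNI0) hNI hj0 count).trans_eq (by ring)
  rw [mul_sum, ← sum_sub_distrib]
  calc _ ≤ ∑ I ∈ idealsNormLE F Y,
          C * (j ^ r / j) * X ^ (n - 1) * ((Ideal.absNorm I : ℝ) ^ r / Ideal.absNorm I) :=
        (abs_sum_le_sum_abs _ _).trans (sum_le_sum term_le)
    _ ≤ C * (j ^ r / j) * X ^ (n - 1) * (D * (A * X ^ n) ^ r) := by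
        rw [← mul_sum]
        gcongr
        exact (hD Y).trans (by gcongr)
    _ = C * (j ^ r / j) * (D * A ^ r) * (X ^ (n - 1) * X) := by
        rw [Real.mul_rpow hA (by positivity), hr, Real.pow_rpow_inv_natCast (by positivity) hn0]
        ring
    _ = _ := by rw [← pow_succ, Nat.sub_one_add_one hn0]

theorem exists_abs_sum_sign_absNorm_le (hρ : ∀ m, m ≠ 0 → |ρ m| = 1) :
    ∃ C : ℝ, ∀ Y : ℕ, |∑ I ∈ idealsNormLE F Y, ρ (Ideal.absNorm I)| ≤ C * Y := by
  obtain ⟨C, hC⟩ := exists_sum_idealCount_le F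
  refine ⟨C, fun Y => ?_⟩
  calc |∑ I ∈ idealsNormLE F Y, ρ (Ideal.absNorm I)|
      ≤ ∑ I ∈ idealsNormLE F Y, |ρ (Ideal.absNorm I)| := abs_sum_le_sum_abs _ _
    _ = ∑ I ∈ idealsNormLE F Y, 1 :=
        sum_congr rfl fun I hI => hρ _ (absNorm_ne_zero_of_mem_idealsNormLE hI)
    _ = ∑ k ∈ Icc 1 Y, (idealCount F k : ℝ) := by simpa using sum_idealsNormLE F Y fun _ => 1
    _ ≤ C * Y := hC Y

theorem exists_abs_sum_sign_div_absNorm_le_of_norm_le [Nonempty ι]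
    (hρ : ∀ m, m ≠ 0 → |ρ m| = 1) (hJ0 : J ≠ ⊥) (hJ : ρ (Ideal.absNorm J) = -1)
    (hprin : ∀ γ : 𝓞 F, γ ≠ 0 → ρ (Ideal.absNorm (Ideal.span {γ})) = 1) {A : ℕ}
    (hA : ∀ X, ∀ γ ∈ coordBox b X, (Algebra.norm ℤ γ).natAbs ≤ A * X ^ Fintype.card ι) :
    ∃ B : ℝ, ∀ X : ℕ, |∑ I ∈ idealsNormLE F (A * X ^ Fintype.card ι),
      ρ (Ideal.absNorm I) / Ideal.absNorm I| ≤ B := by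
  classical
  set n := Fintype.card ι
  have hj0 : (0 : ℝ) < Ideal.absNorm J :=
    Nat.cast_pos.mpr (Nat.pos_of_ne_zero (Ideal.absNorm_eq_zero_iff.not.mpr hJ0))
  obtain ⟨C, hC⟩ := exists_abs_sum_sign_mul_card_coordBox_sub_le b hρ hJ0 (Nat.cast_nonneg A)
  obtain ⟨D, hD⟩ := exists_abs_sum_sign_absNorm_le (F := F) hρ
  refine ⟨max 0 ((C + D * A) * Ideal.absNorm J), fun X => ?_⟩
  rcases Nat.eq_zero_or_pos X with rfl | hX
  · rw [zero_pow Fintype.card_ne_zero, mul_zero, sum_idealsNormLE F 0 fun k => ρ k / k]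
    simp
  have estimate := hC X (A * X ^ n) hX (by push_cast; rfl)
  rw [sum_sign_mul_card_coordBox_eq b hρ hJ hprin (hA X)] at estimate
  set S := ∑ I ∈ idealsNormLE F (A * X ^ n), ρ (Ideal.absNorm I) / Ideal.absNorm I
  have scaled : (2 * X + 1) ^ n / (Ideal.absNorm J : ℝ) * |S| ≤ (C + D * A) * X ^ n := by
    rw [← abs_of_nonneg (by positivity : 0 ≤ (2 * X + 1) ^ n / (Ideal.absNorm J : ℝ)), ← abs_mul]
    have total := hD (A * X ^ n)
    push_cast at total
    rw [abs_sub_comm] at estimate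
    linarith [abs_sub_abs_le_abs_sub ((2 * X + 1) ^ n / (Ideal.absNorm J : ℝ) * S)
      (∑ I ∈ idealsNormLE F (A * X ^ n), ρ (Ideal.absNorm I))]
  refine le_max_of_le_right (le_of_mul_le_mul_left ?_ (by positivity : (0 : ℝ) < X ^ n))
  calc X ^ n * |S| ≤ (2 * X + 1) ^ n * |S| := by
        refine mul_le_mul_of_nonneg_right (pow_le_pow_left₀ (Nat.cast_nonneg X) ?_ n) (abs_nonneg S)
        linarith [Nat.cast_nonneg (α := ℝ) X]
    _ = (2 * X + 1) ^ n / (Ideal.absNorm J : ℝ) * |S| * Ideal.absNorm J := by field_simp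
    _ ≤ (C + D * A) * X ^ n * Ideal.absNorm J := by gcongr
    _ = _ := by ring

theorem exists_abs_sum_idealCount_mul_sign_div_le (hρ : ∀ m, m ≠ 0 → |ρ m| = 1) (hJ0 : J ≠ ⊥)
    (hJ : ρ (Ideal.absNorm J) = -1)
    (hprin : ∀ γ : 𝓞 F, γ ≠ 0 → ρ (Ideal.absNorm (Ideal.span {γ})) = 1) :
    ∃ B : ℝ, ∀ Y, |∑ k ∈ Icc 1 Y, idealCount F k * (ρ k / k)| ≤ B := by
  have := (RingOfIntegers.basis F).index_nonempty
  obtain ⟨C, hC⟩ := exists_sum_idealCount_le F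
  obtain ⟨A, hA0, hA⟩ := exists_natAbs_norm_le (RingOfIntegers.basis F)
  obtain ⟨B, hB⟩ :=
    exists_abs_sum_sign_div_absNorm_le_of_norm_le (RingOfIntegers.basis F) hρ hJ0 hJ hprin hA
  refine exists_abs_sum_Icc_le (fun _ => Nat.cast_nonneg _) hC (fun k => ?_) hA0
    Fintype.card_ne_zero fun X => (sum_idealsNormLE F _ fun k => ρ k / k) ▸ hB X
  rcases Nat.eq_zero_or_pos k with rfl | hk
  · simp
  · rw [abs_mul, abs_div, hρ k hk.ne', Nat.abs_cast, Nat.abs_cast, mul_one_div]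

end SignSum

section EulerProduct

open IsDedekindDomain UniqueFactorizationMonoid NumberField

instance countable_heightOneSpectrum (F : Type*) [Field F] [NumberField F] :
    Countable (HeightOneSpectrum (𝓞 F)) := by
  have : Countable (Ideal (𝓞 F)) := by
    have hcover : (Set.univ : Set (Ideal (𝓞 F))) = ⋃ k : ℕ, {I | Ideal.absNorm I = k} := by
      ext I
      simp
    rw [← Set.countable_univ_iff, hcover]
    exact Set.countable_iUnion fun k => (Ideal.finite_setOfPred_absNorm_eq k).countable
  exact Function.Injective.countable (f := HeightOneSpectrum.asIdeal)
    fun _ _ => HeightOneSpectrum.ext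

instance infinite_heightOneSpectrum (F : Type*) [Field F] [NumberField F] :
    Infinite (HeightOneSpectrum (𝓞 F)) := by
  have exists_over : ∀ p : Nat.Primes, ∃ P : HeightOneSpectrum (𝓞 F),
      P.asIdeal.LiesOver (Ideal.span {((p : ℕ) : ℤ)}) := fun p => by
    have hp : Prime ((p : ℕ) : ℤ) := Nat.prime_iff_prime_int.mp p.2
    have : (Ideal.span {((p : ℕ) : ℤ)}).IsMaximal :=
      PrincipalIdealRing.isMaximal_of_irreducible hp.irreducible
    obtain ⟨P, hP, hPp⟩ :=
      Ideal.exists_maximal_ideal_liesOver_of_isIntegral (S := 𝓞 F) (Ideal.span {((p : ℕ) : ℤ)})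
    exact ⟨⟨P, hP.isPrime, Ideal.ne_bot_of_liesOver_of_ne_bot
      (Ideal.span_singleton_eq_bot.not.mpr hp.ne_zero) P⟩, hPp⟩
  choose P hP using exists_over
  refine Infinite.of_injective P fun p q hpq => Subtype.ext ?_
  have hspan := (hP p).over.trans
    ((congrArg (fun P => P.asIdeal.under ℤ) hpq).trans (hP q).over.symm)
  simpa using Int.natAbs_eq_iff_associated.mpr (Ideal.span_singleton_eq_span_singleton.mp hspan)

variable {R : Type*} [CommRing R] (e : Nat.Primes ≃ HeightOneSpectrum R)

/-- The multiplicative map from positive integers to ideals extending a bijection between the prime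
numbers and the nonzero prime ideals. -/
noncomputable def idealOfPNat : ℕ+ →* Ideal R where
  toFun n := (Multiset.map (fun p => (e p).asIdeal) n.factorMultiset).prod
  map_one' := by
    rw [PNat.factorMultiset_one]
    exact congrArg Multiset.prod (Multiset.map_zero _)
  map_mul' m n := by
    rw [PNat.factorMultiset_mul, ← Multiset.prod_add]
    exact congrArg Multiset.prod (Multiset.map_add _ _ _)

theorem idealOfPNat_prime (p : Nat.Primes) : idealOfPNat e p = (e p).asIdeal := by
  refine (congrArg (fun v => (Multiset.map (fun p => (e p).asIdeal) v).prod)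
    (PNat.factorMultiset_ofPrime p)).trans ?_
  exact (congrArg Multiset.prod (Multiset.map_singleton _ _)).trans (Multiset.prod_singleton _)

/-- The extension of `idealOfPNat` to a multiplicative map on all natural numbers. -/
noncomputable def idealOfNat : ℕ →*₀ Ideal R where
  toFun n := if h : 0 < n then idealOfPNat e (n.toPNat h) else 0
  map_zero' := by simp
  map_one' := (dif_pos one_pos).trans (map_one (idealOfPNat e))
  map_mul' m n := by
    rcases Nat.eq_zero_or_pos m with rfl | hm
    · simp
    rcases Nat.eq_zero_or_pos n with rfl | hn
    · simp
    rw [dif_pos hm, dif_pos hn, dif_pos (Nat.mul_pos hm hn), ← map_mul]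
    rfl

theorem idealOfNat_coe (n : ℕ+) : idealOfNat e n = idealOfPNat e n := dif_pos n.pos

variable [IsDedekindDomain R]

theorem normalizedFactors_idealOfPNat (n : ℕ+) :
    normalizedFactors (idealOfPNat e n) =
      Multiset.map (fun p => (e p).asIdeal) n.factorMultiset := by
  change normalizedFactors (Multiset.map (fun p => (e p).asIdeal) n.factorMultiset).prod = _
  refine normalizedFactors_prod_of_prime fun P hP => ?_
  obtain ⟨p, -, rfl⟩ := Multiset.mem_map.mp hP
  exact (e p).prime

theorem idealOfPNat_injective : Function.Injective (idealOfPNat e) := fun m n hmn => by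
  have h := congrArg normalizedFactors hmn
  rw [normalizedFactors_idealOfPNat, normalizedFactors_idealOfPNat] at h
  exact PNat.factorMultisetEquiv.injective
    (Multiset.map_injective (fun p q h => e.injective (HeightOneSpectrum.ext h)) h)

theorem idealOfPNat_ne_zero (n : ℕ+) : idealOfPNat e n ≠ 0 := by
  change (Multiset.map (fun p => (e p).asIdeal) n.factorMultiset).prod ≠ 0
  refine Multiset.prod_ne_zero fun h0 => ?_
  obtain ⟨p, -, hp⟩ := Multiset.mem_map.mp h0
  exact (e p).ne_bot hp

theorem exists_idealOfPNat_eq {I : Ideal R} (hI : I ≠ 0) : ∃ n, idealOfPNat e n = I := by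
  have : CanLift (Ideal R) (HeightOneSpectrum R) HeightOneSpectrum.asIdeal Prime :=
    ⟨fun P hP => ⟨⟨P, Ideal.isPrime_of_prime hP, hP.ne_zero⟩, rfl⟩⟩
  obtain ⟨T, hT⟩ : ∃ T : Multiset (HeightOneSpectrum R),
      Multiset.map HeightOneSpectrum.asIdeal T = normalizedFactors I := by
    lift normalizedFactors I to Multiset (HeightOneSpectrum R) using
      fun P hP => prime_of_normalized_factor P hP with T
    exact ⟨T, rfl⟩
  let v : PrimeMultiset := Multiset.map e.symm T
  refine ⟨v.prod, ?_⟩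
  change (Multiset.map (fun p => (e p).asIdeal) v.prod.factorMultiset).prod = I
  rw [PrimeMultiset.factorMultiset_prod, Multiset.map_map]
  simp only [Function.comp_apply, Equiv.apply_symm_apply, hT]
  exact associated_iff_eq.mp (prod_normalizedFactors hI)

theorem idealOfNat_bijective : Function.Bijective (idealOfNat e) := by
  have coe_ne_zero : ∀ n, 0 < n → idealOfNat e n ≠ 0 := fun n hn =>
    (idealOfNat_coe e ⟨n, hn⟩).trans_ne (idealOfPNat_ne_zero e _)
  refine ⟨fun m n hmn => ?_, fun I => ?_⟩
  · rcases Nat.eq_zero_or_pos m with rfl | hm <;> rcases Nat.eq_zero_or_pos n with rfl | hn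
    · rfl
    · exact absurd (hmn.symm.trans (map_zero _)) (coe_ne_zero n hn)
    · exact absurd (hmn.trans (map_zero _)) (coe_ne_zero m hm)
    · exact congrArg PNat.val (@idealOfPNat_injective R _ e _ ⟨m, hm⟩ ⟨n, hn⟩
        ((idealOfNat_coe e _).symm.trans (hmn.trans (idealOfNat_coe e ⟨n, hn⟩))))
  · rcases eq_or_ne I 0 with rfl | hI
    · exact ⟨0, map_zero _⟩
    · obtain ⟨n, rfl⟩ := exists_idealOfPNat_eq e hI
      exact ⟨n, idealOfNat_coe e n⟩

-- A bijection between the nonzero prime ideals and the prime numbers carries the product to an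
-- Euler product over `ℕ`.
theorem hasProd_ideal [Countable (HeightOneSpectrum R)] [Infinite (HeightOneSpectrum R)]
    (g : Ideal R →*₀ ℝ) (hg : Summable fun I => ‖g I‖) :
    HasProd (fun P : HeightOneSpectrum R => (1 - g P.asIdeal)⁻¹) (∑' I, g I) := by
  obtain ⟨e⟩ : Nonempty (Nat.Primes ≃ HeightOneSpectrum R) := nonempty_equiv_of_countable
  have euler := EulerProduct.eulerProduct_completely_multiplicative_hasProd
    (f := g.comp (idealOfNat e)) (hg.comp_injective (idealOfNat_bijective e).1)
  have reindex : ∑' n, g.comp (idealOfNat e) n = ∑' I, g I :=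
    (Equiv.ofBijective _ (idealOfNat_bijective e)).tsum_eq g
  rw [reindex] at euler
  refine e.hasProd_iff.mp (euler.congr_fun fun p => ?_)
  exact congrArg (fun I => (1 - g I)⁻¹) ((idealOfNat_coe e p).trans (idealOfPNat_prime e p)).symm

end EulerProduct

section PrimeSums

open Filter Topology IsDedekindDomain NumberField

theorem abs_log_inv_one_sub_sub_le {x : ℝ} (hx : |x| ≤ 1 / 2) :
    |Real.log (1 - x)⁻¹ - x| ≤ 2 * x ^ 2 := by
  have h := Real.abs_log_sub_add_sum_range_le (x := x) (by linarith) 1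
  simp only [Finset.sum_range_one, zero_add, pow_one, Nat.cast_zero, div_one] at h
  rw [Real.log_inv, ← abs_neg, show -(-Real.log (1 - x) - x) = x + Real.log (1 - x) by ring]
  refine h.trans ?_
  rw [div_le_iff₀ (by linarith), ← sq_abs x]
  norm_num
  nlinarith [sq_nonneg |x|]

theorem summable_heightOneSpectrum {R : Type*} [CommRing R] {f : Ideal R → ℝ} (hf : Summable f) :
    Summable fun P : HeightOneSpectrum R => f P.asIdeal :=
  hf.comp_injective fun _ _ => HeightOneSpectrum.ext

theorem exp_tsum_log_eq_tsum_ideal {R : Type*} [CommRing R] [IsDedekindDomain R]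
    [Countable (HeightOneSpectrum R)] [Infinite (HeightOneSpectrum R)]
    {g : Ideal R →*₀ ℝ} (hg : Summable fun I => ‖g I‖)
    (hsmall : ∀ P : HeightOneSpectrum R, |g P.asIdeal| ≤ 1 / 2) :
    Summable (fun P : HeightOneSpectrum R => Real.log (1 - g P.asIdeal)⁻¹) ∧
      Real.exp (∑' P : HeightOneSpectrum R, Real.log (1 - g P.asIdeal)⁻¹) = ∑' I, g I := by
  have hlog : Summable fun P : HeightOneSpectrum R => Real.log (1 - g P.asIdeal)⁻¹ := by
    refine (Real.summable_log_one_add_of_summable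
      (summable_heightOneSpectrum hg.of_norm).neg).neg.congr fun P => ?_
    rw [Real.log_inv, sub_eq_add_neg]
  refine ⟨hlog, ?_⟩
  rw [Real.rexp_tsum_eq_tprod (fun P => ?_) hlog, (hasProd_ideal g hg).tprod_eq]
  exact inv_pos.mpr (by linarith [(abs_le.mp (hsmall P)).2])

theorem two_le_absNorm {R : Type*} [CommRing R] [IsDedekindDomain R] [Module.Free ℤ R]
    [Module.Finite ℤ R] (P : HeightOneSpectrum R) : 2 ≤ Ideal.absNorm P.asIdeal :=
  (Nat.two_le_iff _).mpr ⟨Ideal.absNorm_eq_zero_iff.not.mpr P.ne_bot,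
    Ideal.absNorm_eq_one_iff.not.mpr P.isPrime.ne_top⟩

variable {F : Type*} [Field F] [NumberField F]

variable (F) in
theorem summable_absNorm_prime_rpow {s : ℝ} (hs : 1 < s) :
    Summable fun P : HeightOneSpectrum (𝓞 F) => (Ideal.absNorm P.asIdeal : ℝ) ^ (-s) :=
  summable_heightOneSpectrum (summable_absNorm_rpow F hs)

-- Take logarithms in the Euler product.
theorem abs_log_tsum_ideal_sub_le {g : Ideal (𝓞 F) →*₀ ℝ} {s : ℝ} (hs : 1 < s)
    (hg : ∀ I, |g I| ≤ (Ideal.absNorm I : ℝ) ^ (-s)) :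
    0 < ∑' I, g I ∧
    |Real.log (∑' I, g I) - ∑' P : HeightOneSpectrum (𝓞 F), g P.asIdeal| ≤
      2 * ∑' P : HeightOneSpectrum (𝓞 F), (Ideal.absNorm P.asIdeal : ℝ) ^ (-2 : ℝ) := by
  have le_inv : ∀ P : HeightOneSpectrum (𝓞 F),
      |g P.asIdeal| ≤ (Ideal.absNorm P.asIdeal : ℝ)⁻¹ := fun P => by
    rw [← Real.rpow_neg_one]
    exact (hg _).trans (Real.rpow_le_rpow_of_exponent_le
      (by exact_mod_cast one_le_two.trans (two_le_absNorm P)) (by linarith))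
  have hsmall : ∀ P : HeightOneSpectrum (𝓞 F), |g P.asIdeal| ≤ 1 / 2 := fun P => by
    rw [one_div]
    exact (le_inv P).trans (inv_anti₀ two_pos (by exact_mod_cast two_le_absNorm P))
  have hsum : Summable fun I => ‖g I‖ :=
    (summable_absNorm_rpow F hs).of_nonneg_of_le (fun I => norm_nonneg _) hg
  obtain ⟨hlog, hexp⟩ := exp_tsum_log_eq_tsum_ideal hsum hsmall
  rw [← hexp, Real.log_exp, ← hlog.tsum_sub (summable_heightOneSpectrum hsum.of_norm),
    ← tsum_mul_left, ← Real.norm_eq_abs]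
  refine ⟨Real.exp_pos _, ?_⟩
  refine tsum_of_norm_bounded ((summable_absNorm_prime_rpow F one_lt_two).mul_left 2).hasSum
    fun P => ?_
  rw [Real.norm_eq_abs]
  refine (abs_log_inv_one_sub_sub_le (hsmall P)).trans (mul_le_mul_of_nonneg_left ?_ two_pos.le)
  rw [← sq_abs, Real.rpow_neg (Nat.cast_nonneg _), Real.rpow_two, ← inv_pow]
  exact pow_le_pow_left₀ (abs_nonneg _) (le_inv P) 2

/-- The term `ρ (N I) * (N I) ^ (-s)` of the Dirichlet series attached to a completely
multiplicative `ρ`. -/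
noncomputable def dirichletTerm (ρ : ℕ →*₀ ℝ) (s : ℝ) : Ideal (𝓞 F) →*₀ ℝ where
  toFun I := ρ (Ideal.absNorm I) * (Ideal.absNorm I : ℝ) ^ (-s)
  map_zero' := by simp
  map_one' := by simp
  map_mul' I J := by
    rw [map_mul, map_mul, Nat.cast_mul, Real.mul_rpow (Nat.cast_nonneg _) (Nat.cast_nonneg _)]
    ring

theorem abs_dirichletTerm {ρ : ℕ →*₀ ℝ} (hρ : ∀ m, m ≠ 0 → |ρ m| = 1) {s : ℝ} (hs : 1 < s)
    (I : Ideal (𝓞 F)) : |dirichletTerm ρ s I| = (Ideal.absNorm I : ℝ) ^ (-s) := by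
  change |ρ (Ideal.absNorm I) * (Ideal.absNorm I : ℝ) ^ (-s)| = _
  rw [abs_mul, abs_of_nonneg (by positivity : (0 : ℝ) ≤ (Ideal.absNorm I : ℝ) ^ (-s))]
  rcases eq_or_ne (Ideal.absNorm I) 0 with h0 | h0
  · rw [h0, Nat.cast_zero, Real.zero_rpow (by linarith), mul_zero]
  · rw [hρ _ h0, one_mul]

theorem tsum_dirichletTerm_le {ρ : ℕ →*₀ ℝ} (hρ : ∀ m, m ≠ 0 → |ρ m| = 1) {B : ℝ}
    (hB : ∀ Y, |∑ k ∈ Finset.Icc 1 Y, idealCount F k * (ρ k / k)| ≤ B) {s : ℝ} (hs : 1 < s) :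
    ∑' I : Ideal (𝓞 F), dirichletTerm ρ s I ≤ B := by
  have hsum : Summable (dirichletTerm (F := F) ρ s) := Summable.of_abs
    ((summable_absNorm_rpow F hs).congr fun I => (abs_dirichletTerm hρ hs I).symm)
  refine le_of_tendsto (tendsto_sum_idealsNormLE (map_zero _) hsum)
    (Eventually.of_forall fun Y => ?_)
  have abel := abs_sum_Icc_mul_le (w := fun k : ℕ => (k : ℝ) ^ (-(s - 1))) hB
    (fun k hk => Real.rpow_le_rpow_of_nonpos (by exact_mod_cast hk) (by simp) (by linarith))
    (fun k => by positivity) Y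
  rw [Nat.cast_one, Real.one_rpow, mul_one] at abel
  refine le_trans (le_of_eq ?_) ((le_abs_self _).trans abel)
  refine (sum_idealsNormLE F Y fun k => ρ k * (k : ℝ) ^ (-s)).trans
    (Finset.sum_congr rfl fun k hk => ?_)
  have hk0 : (0 : ℝ) < k := Nat.cast_pos.mpr (Finset.mem_Icc.mp hk).1
  rw [show -s = -(s - 1) + -1 by ring, Real.rpow_add hk0, Real.rpow_neg_one]
  ring

theorem exists_tsum_prime_sign_le {ρ : ℕ →*₀ ℝ} (hρ : ∀ m, m ≠ 0 → |ρ m| = 1)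
    {J : Ideal (𝓞 F)} (hJ0 : J ≠ ⊥) (hJ : ρ (Ideal.absNorm J) = -1)
    (hprin : ∀ γ : 𝓞 F, γ ≠ 0 → ρ (Ideal.absNorm (Ideal.span {γ})) = 1) :
    ∃ C : ℝ, ∀ s : ℝ, 1 < s → ∑' P : HeightOneSpectrum (𝓞 F),
      ρ (Ideal.absNorm P.asIdeal) * (Ideal.absNorm P.asIdeal : ℝ) ^ (-s) ≤ C := by
  obtain ⟨B, hB⟩ := exists_abs_sum_idealCount_mul_sign_div_le hρ hJ0 hJ hprin
  refine ⟨Real.log B +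
    2 * ∑' P : HeightOneSpectrum (𝓞 F), (Ideal.absNorm P.asIdeal : ℝ) ^ (-2 : ℝ), fun s hs => ?_⟩
  obtain ⟨hpos, hlog⟩ := abs_log_tsum_ideal_sub_le (F := F) hs fun I =>
    (abs_dirichletTerm hρ hs I).le
  have hle := Real.log_le_log hpos (tsum_dirichletTerm_le hρ hB hs)
  change |_ - ∑' P : HeightOneSpectrum (𝓞 F),
    ρ (Ideal.absNorm P.asIdeal) * (Ideal.absNorm P.asIdeal : ℝ) ^ (-s)| ≤ _ at hlog
  linarith [(abs_le.mp hlog).1]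

variable (F)

theorem tendsto_sub_one_mul_tsum_absNorm_rpow :
    Tendsto (fun s : ℝ => (s - 1) * ∑' I : Ideal (𝓞 F), (Ideal.absNorm I : ℝ) ^ (-s)) (𝓝[>] 1)
      (𝓝 (dedekindZeta_residue F)) := by
  have h := (Complex.continuous_re.tendsto _).comp (tendsto_sub_one_mul_dedekindZeta_nhdsGT F)
  rw [Complex.ofReal_re] at h
  refine h.congr' ?_
  filter_upwards [self_mem_nhdsWithin] with s hs
  rw [Function.comp_apply, dedekindZeta_eq_tsum F hs, ← Complex.ofReal_one,
    ← Complex.ofReal_sub, ← Complex.ofReal_mul, Complex.ofReal_re]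

-- Near `s = 1`, the zeta function is `residue / (s - 1)` up to a factor tending to `1`.
theorem exists_abs_tsum_prime_add_log_le : ∃ C : ℝ, ∀ᶠ s in 𝓝[>] (1 : ℝ),
    |∑' P : HeightOneSpectrum (𝓞 F), (Ideal.absNorm P.asIdeal : ℝ) ^ (-s) + Real.log (s - 1)|
      ≤ C := by
  have hlim := (tendsto_sub_one_mul_tsum_absNorm_rpow F).log (dedekindZeta_residue_pos F).ne'
  set L := Real.log (dedekindZeta_residue F)
  refine ⟨|L| + 1 + 2 * ∑' P : HeightOneSpectrum (𝓞 F), (Ideal.absNorm P.asIdeal : ℝ) ^ (-2 : ℝ),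
    ?_⟩
  filter_upwards [hlim.abs.eventually (eventually_lt_nhds (lt_add_one |L|)), self_mem_nhdsWithin]
    with s hlog_lt (hs : 1 < s)
  have hone : ∀ m : ℕ, m ≠ 0 → |(1 : ℕ →*₀ ℝ) m| = 1 := fun m hm => by
    rw [MonoidWithZeroHom.one_apply_of_ne_zero hm, abs_one]
  have term_eq (I : Ideal (𝓞 F)) : dirichletTerm 1 s I = (Ideal.absNorm I : ℝ) ^ (-s) := by
    rw [← abs_dirichletTerm hone hs I]
    refine (abs_of_nonneg (mul_nonneg ?_ (by positivity))).symm
    rcases eq_or_ne (Ideal.absNorm I) 0 with h0 | h0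
    · rw [h0, map_zero]
    · rw [MonoidWithZeroHom.one_apply_of_ne_zero h0]
      exact zero_le_one
  obtain ⟨hpos, hle⟩ := abs_log_tsum_ideal_sub_le (F := F) hs fun I =>
    (abs_dirichletTerm hone hs I).le
  simp only [term_eq] at hpos hle
  rw [Real.log_mul (by linarith) hpos.ne'] at hlog_lt
  rw [abs_le] at hle ⊢
  have := abs_lt.mp hlog_lt
  constructor <;> linarith

end PrimeSums

section Splitting

open IsDedekindDomain

variable {R S : Type*} [CommRing R] [CommRing S] [Algebra R S]

theorem card_primesOver_le_finrank [IsDomain R] [Module.Finite R S] [Module.Flat R S] (P : Ideal R)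
    [P.IsPrime] [Fintype (P.primesOver S)] :
    Fintype.card (P.primesOver S) ≤ Module.finrank R S := by
  rw [← Ideal.sum_ramification_inertia_eq_finrank P S, Fintype.card, Finset.card_eq_sum_ones]
  refine Finset.sum_le_sum fun q _ => ?_
  have := q.2.1
  exact Nat.mul_pos (Ideal.ramificationIdx_pos q.1 R) (Ideal.inertiaDeg_pos q.1 R)

theorem inertiaDeg_eq_one_of_ne [IsDomain R] [Module.Finite R S] [Module.Flat R S]
    (hrank : Module.finrank R S = 2) (P : Ideal R) [P.IsPrime] [Finite (P.primesOver S)]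
    {q q' : P.primesOver S} (hne : q ≠ q') : q.1.inertiaDeg R = 1 := by
  classical
  have := Fintype.ofFinite (P.primesOver S)
  have hpos (q : P.primesOver S) : 0 < q.1.ramificationIdx R ∧ 0 < q.1.inertiaDeg R := by
    have := q.2.1
    exact ⟨Ideal.ramificationIdx_pos q.1 R, Ideal.inertiaDeg_pos q.1 R⟩
  have hpair : ∑ x ∈ {q, q'}, x.1.ramificationIdx R * x.1.inertiaDeg R ≤ 2 := by
    rw [← hrank, ← Ideal.sum_ramification_inertia_eq_finrank P S]
    exact Finset.sum_le_sum_of_subset (Finset.subset_univ _)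
  rw [Finset.sum_pair hne] at hpair
  have := Nat.mul_pos (hpos q').1 (hpos q').2
  have := Nat.le_mul_of_pos_left (q.1.inertiaDeg R) (hpos q).1
  have := (hpos q).2
  omega

-- If `m = a²` modulo `P` then every prime over `P` contains exactly one of `a ± w`, and `σ`
-- exchanges the two.
theorem exists_primesOver_ne [Algebra.IsIntegral R S] [FaithfulSMul R S] (P : Ideal R)
    [P.IsMaximal] {m : R} {w : S} (hw : w ^ 2 = algebraMap R S m) (σ : S ≃ₐ[R] S) (hσ : σ w = -w)
    (hP : 4 * m ∉ P) (hm : IsSquare (Ideal.Quotient.mk P m)) :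
    ∃ q q' : P.primesOver S, q ≠ q' := by
  obtain ⟨r, hr⟩ := hm
  obtain ⟨a, rfl⟩ := Ideal.Quotient.mk_surjective r
  have ha : m - a * a ∈ P := Ideal.Quotient.eq.mp (hr.trans (map_mul _ a a).symm)
  obtain ⟨q, hq, hqP⟩ := Ideal.exists_maximal_ideal_liesOver_of_isIntegral (S := S) P
  refine ⟨⟨q, hq.isPrime, hqP⟩, ⟨q.comap σ, Ideal.comap_isPrime σ q, inferInstance⟩, fun heq => ?_⟩
  have hinv (x : S) : x ∈ q ↔ σ x ∈ q := by
    have hq' : q = q.comap σ := congrArg Subtype.val heq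
    conv_lhs => rw [hq']
    exact Ideal.mem_comap
  have mem_iff (x : R) : x ∈ P ↔ algebraMap R S x ∈ q := by rw [hqP.over]; rfl
  have hsub : w - algebraMap R S a ∈ q ↔ w + algebraMap R S a ∈ q := by
    rw [hinv, map_sub, hσ, AlgEquiv.commutes, ← neg_add', neg_mem_iff]
  have hprod : (w - algebraMap R S a) * (w + algebraMap R S a) ∈ q := by
    have := (mem_iff _).mp ha
    rw [map_sub, map_mul, ← hw] at this
    convert this using 1
    ring
  have hadd : w + algebraMap R S a ∈ q := (hq.isPrime.mem_or_mem hprod).elim hsub.mp id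
  have h2w : 2 * w ∈ q := by
    convert q.add_mem (hsub.mpr hadd) hadd using 1
    ring
  refine hP ((mem_iff _).mpr ?_)
  rw [map_mul, map_ofNat, ← hw]
  convert q.mul_mem_left (2 * w) h2w using 1
  ring

theorem one_lt_inertiaDeg_of_not_isSquare [Module.Finite R S] (P : Ideal R) [P.IsMaximal] {m : R}
    {w : S} (hw : w ^ 2 = algebraMap R S m) (hm : ¬ IsSquare (Ideal.Quotient.mk P m))
    (q : Ideal S) [q.IsPrime] [q.LiesOver P] : 1 < q.inertiaDeg R := by
  have : q.IsMaximal := Ideal.isMaximal_of_isIntegral_of_isMaximal_comap (R := R) q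
    (by rwa [← Ideal.under_def, ← q.over_def P])
  refine lt_of_le_of_ne (Ideal.inertiaDeg_pos q R) fun h1 => hm ?_
  rw [Ideal.inertiaDeg_eq_of_isMaximal P q] at h1
  let : Field (R ⧸ P) := Ideal.Quotient.field _
  let : Field (S ⧸ q) := Ideal.Quotient.field _
  obtain ⟨c, hc⟩ := (finrank_eq_one_iff_of_nonzero' (1 : S ⧸ q) one_ne_zero).mp h1.symm
    (Ideal.Quotient.mk q w)
  refine ⟨c, (algebraMap (R ⧸ P) (S ⧸ q)).injective ?_⟩
  rw [Ideal.Quotient.algebraMap_mk_of_liesOver, ← hw, map_pow, ← hc, Algebra.smul_def, mul_one,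
    map_mul, sq]

variable [IsDedekindDomain R] [IsDedekindDomain S]

theorem tsum_under_fiber [Algebra.IsIntegral R S] [FaithfulSMul R S] (P : HeightOneSpectrum R)
    [Fintype (P.asIdeal.primesOver S)] (f : Ideal S → ℝ) :
    ∑' Q : (fun Q : HeightOneSpectrum S => Q.under R) ⁻¹' {P}, f Q.1.asIdeal =
      ∑ q : P.asIdeal.primesOver S, f q.1 := by
  let e : (fun Q : HeightOneSpectrum S => Q.under R) ⁻¹' {P} ≃ P.asIdeal.primesOver S :=
    { toFun := fun Q => ⟨Q.1.asIdeal, Q.1.isPrime,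
        ⟨(congrArg HeightOneSpectrum.asIdeal (Set.mem_singleton_iff.mp Q.2)).symm⟩⟩
      invFun := fun q =>
        ⟨⟨q.1, q.2.1, have := q.2.2; Ideal.ne_bot_of_liesOver_of_ne_bot P.ne_bot q.1⟩,
          HeightOneSpectrum.ext q.2.2.over.symm⟩
      left_inv := fun _ => rfl
      right_inv := fun _ => rfl }
  rw [← tsum_fintype (L := SummationFilter.unconditional _), ← e.tsum_eq]
  rfl

variable [Module.Free ℤ R] [Module.Free ℤ S] [Module.Finite R S] [Module.Flat R S]

theorem sum_primesOver_of_isSquare (hrank : Module.finrank R S = 2) (P : Ideal R) [P.IsMaximal]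
    [Fintype (P.primesOver S)] {m : R} {w : S} (hw : w ^ 2 = algebraMap R S m)
    (σ : S ≃ₐ[R] S) (hσ : σ w = -w) (hP : 4 * m ∉ P) (hm : IsSquare (Ideal.Quotient.mk P m))
    (f : ℕ → ℝ) :
    ∑ q : P.primesOver S, f (Ideal.absNorm q.1) = 2 * f (Ideal.absNorm P) := by
  obtain ⟨q₀, q₁, hne⟩ := exists_primesOver_ne P hw σ hσ hP hm
  have hnorm (q : P.primesOver S) : Ideal.absNorm q.1 = Ideal.absNorm P := by
    have hdeg : q.1.inertiaDeg R = 1 := by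
      rcases eq_or_ne q q₀ with rfl | h0
      · exact inertiaDeg_eq_one_of_ne hrank P hne
      · exact inertiaDeg_eq_one_of_ne hrank P h0
    have := q.2.1
    have := q.2.2
    rw [← Ideal.absNorm_pow_inertiaDeg P q.1, hdeg, pow_one]
  have hcard : Fintype.card (P.primesOver S) = 2 :=
    le_antisymm ((card_primesOver_le_finrank P).trans_eq hrank)
      (Fintype.one_lt_card_iff.mpr ⟨q₀, q₁, hne⟩)
  rw [Finset.sum_congr rfl fun q _ => by rw [hnorm q], Finset.sum_const, Finset.card_univ, hcard,
    nsmul_eq_mul, Nat.cast_ofNat]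

theorem sum_primesOver_rpow_le [Module.Finite ℤ R] (P : HeightOneSpectrum R)
    [Fintype (P.asIdeal.primesOver S)] {r : ℕ}
    (hr : ∀ q : P.asIdeal.primesOver S, r ≤ q.1.inertiaDeg R) {s : ℝ} (hs : 1 < s) :
    ∑ q : P.asIdeal.primesOver S, (Ideal.absNorm q.1 : ℝ) ^ (-s) ≤
      Module.finrank R S * (Ideal.absNorm P.asIdeal : ℝ) ^ (-r : ℝ) := by
  have hP : (1 : ℝ) ≤ Ideal.absNorm P.asIdeal :=
    Nat.one_le_cast.mpr (one_le_two.trans (two_le_absNorm P))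
  refine (Finset.sum_le_sum (g := fun _ => (Ideal.absNorm P.asIdeal : ℝ) ^ (-r : ℝ))
    fun q _ => ?_).trans ?_
  · have := q.2.1
    have := q.2.2
    have hdeg : (r : ℝ) ≤ q.1.inertiaDeg R := Nat.cast_le.mpr (hr q)
    rw [← Ideal.absNorm_pow_inertiaDeg P.asIdeal q.1, Nat.cast_pow, ← Real.rpow_natCast,
      ← Real.rpow_mul (Nat.cast_nonneg _)]
    exact Real.rpow_le_rpow_of_exponent_le hP (by nlinarith [(Nat.cast_nonneg r : (0 : ℝ) ≤ r)])
  · rw [Finset.sum_const, nsmul_eq_mul, Finset.card_univ]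
    exact mul_le_mul_of_nonneg_right (Nat.cast_le.mpr (card_primesOver_le_finrank P.asIdeal))
      (by positivity)

end Splitting

section QuadraticExtension

open Filter Topology IsDedekindDomain NumberField

section SquarePrimeSum

variable {R : Type*} [CommRing R] [IsDedekindDomain R]

open Classical in
theorem summable_ite_mem {D : R} (hD : D ≠ 0) (C : ℝ) :
    Summable fun P : HeightOneSpectrum R => if D ∈ P.asIdeal then C else 0 := by
  refine summable_of_hasFiniteSupport ?_
  refine (Ideal.finite_factors (I := Ideal.span {D})
    (Ideal.span_singleton_eq_bot.not.mpr hD)).subset fun P hP => ?_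
  exact Ideal.dvd_span_singleton.mpr (by_contra fun h => hP (if_neg h))

variable [Module.Free ℤ R]

open Classical in
/-- `N(P)⁻ˢ` if `P` does not contain `D` and `m` is a square modulo `P`, and `0` otherwise. -/
noncomputable def squarePrimeTerm (D m : R) (s : ℝ) (P : HeightOneSpectrum R) : ℝ :=
  if D ∉ P.asIdeal ∧ IsSquare (Ideal.Quotient.mk P.asIdeal m)
    then (Ideal.absNorm P.asIdeal : ℝ) ^ (-s) else 0

theorem summable_squarePrimeTerm (D m : R) {s : ℝ}
    (hs : Summable fun P : HeightOneSpectrum R => (Ideal.absNorm P.asIdeal : ℝ) ^ (-s)) :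
    Summable (squarePrimeTerm D m s) := by
  refine hs.of_nonneg_of_le (fun P => ?_) fun P => ?_ <;> unfold squarePrimeTerm <;> split_ifs
  exacts [by positivity, le_rfl, le_rfl, by positivity]

end SquarePrimeSum

open Classical in
theorem abs_sum_primesOver_sub_squarePrimeTerm_le {R S : Type*} [CommRing R] [CommRing S]
    [Algebra R S] [IsDedekindDomain R] [IsDedekindDomain S] [Module.Free ℤ R] [Module.Free ℤ S]
    [Module.Finite ℤ R] [Module.Finite R S] [Module.Flat R S] [FaithfulSMul R S]
    (hrank : Module.finrank R S = 2) {m : R} {w : S} (hw : w ^ 2 = algebraMap R S m)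
    (σ : S ≃ₐ[R] S) (hσ : σ w = -w) {D : R} (hD : 4 * m ∣ D) (P : HeightOneSpectrum R)
    [Fintype (P.asIdeal.primesOver S)] {s : ℝ} (hs : 1 < s) :
    |∑ q : P.asIdeal.primesOver S, (Ideal.absNorm q.1 : ℝ) ^ (-s) -
        2 * squarePrimeTerm D m s P| ≤
      2 * (Ideal.absNorm P.asIdeal : ℝ) ^ (-2 : ℝ) + if D ∈ P.asIdeal then 2 else 0 := by
  have hsum : 0 ≤ ∑ q : P.asIdeal.primesOver S, (Ideal.absNorm q.1 : ℝ) ^ (-s) :=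
    Finset.sum_nonneg fun q _ => by positivity
  have hnorm : 0 ≤ (Ideal.absNorm P.asIdeal : ℝ) ^ (-2 : ℝ) := by positivity
  have := P.isMaximal
  unfold squarePrimeTerm
  by_cases hbad : D ∈ P.asIdeal
  · have := sum_primesOver_rpow_le (S := S) P (fun q => Nat.zero_le _) hs
    rw [hrank, Nat.cast_zero, neg_zero, Real.rpow_zero] at this
    rw [if_neg fun h => h.1 hbad, mul_zero, sub_zero, abs_of_nonneg hsum, if_pos hbad]
    push_cast at this
    linarith
  rw [if_neg hbad, add_zero]
  by_cases hm : IsSquare (Ideal.Quotient.mk P.asIdeal m)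
  · rw [if_pos ⟨hbad, hm⟩, sum_primesOver_of_isSquare hrank P.asIdeal hw σ hσ
      (fun h => hbad (P.asIdeal.mem_of_dvd hD h)) hm fun n : ℕ => (n : ℝ) ^ (-s), sub_self,
      abs_zero]
    positivity
  · rw [if_neg fun h => hm h.2, mul_zero, sub_zero, abs_of_nonneg hsum]
    refine (sum_primesOver_rpow_le P (r := 2) (fun q => ?_) hs).trans_eq (by rw [hrank]; norm_cast)
    have := q.2.1
    have := q.2.2
    exact one_lt_inertiaDeg_of_not_isSquare P.asIdeal hw hm q.1

variable {F : Type*} [Field F] [NumberField F]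

theorem exists_abs_tsum_prime_sub_le {E : Type*} [Field E] [NumberField E] [Algebra F E]
    (hrank : Module.finrank (𝓞 F) (𝓞 E) = 2) {m : 𝓞 F} {w : 𝓞 E}
    (hw : w ^ 2 = algebraMap (𝓞 F) (𝓞 E) m) (σ : 𝓞 E ≃ₐ[𝓞 F] 𝓞 E) (hσ : σ w = -w) {D : 𝓞 F}
    (hD0 : D ≠ 0) (hD : 4 * m ∣ D) :
    ∃ C : ℝ, ∀ s : ℝ, 1 < s →
      |∑' Q : HeightOneSpectrum (𝓞 E), (Ideal.absNorm Q.asIdeal : ℝ) ^ (-s) -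
        2 * ∑' P, squarePrimeTerm D m s P| ≤ C := by
  classical
  have := fun P : HeightOneSpectrum (𝓞 F) => Fintype.ofFinite (P.asIdeal.primesOver (𝓞 E))
  refine ⟨∑' P : HeightOneSpectrum (𝓞 F), (2 * (Ideal.absNorm P.asIdeal : ℝ) ^ (-2 : ℝ) +
    if D ∈ P.asIdeal then 2 else 0), fun s hs => ?_⟩
  have hfiber := (summable_absNorm_prime_rpow E hs).hasSum.tsum_fiberwise fun Q => Q.under (𝓞 F)
  simp only [tsum_under_fiber _ fun Q : Ideal (𝓞 E) => (Ideal.absNorm Q : ℝ) ^ (-s)] at hfiber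
  have hsquare := (summable_squarePrimeTerm D m (summable_absNorm_prime_rpow F hs)).hasSum
  rw [← (hfiber.sub (hsquare.mul_left 2)).tsum_eq, ← Real.norm_eq_abs]
  have hbound :=
    ((summable_absNorm_prime_rpow F one_lt_two).mul_left 2).add (summable_ite_mem hD0 2)
  exact tsum_of_norm_bounded hbound.hasSum fun P =>
    abs_sum_primesOver_sub_squarePrimeTerm_le hrank hw σ hσ hD P hs

theorem exists_abs_tsum_squarePrimeTerm_add_log_le_of_extension {E : Type*} [Field E]
    [NumberField E] [Algebra F E] (hrank : Module.finrank F E = 2) {m : 𝓞 F} {w : E}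
    (hw : w ^ 2 = algebraMap F E m) (σ : E ≃ₐ[F] E) (hσ : σ w = -w) {D : 𝓞 F} (hD0 : D ≠ 0)
    (hD : 4 * m ∣ D) :
    ∃ C : ℝ, ∀ᶠ s in 𝓝[>] (1 : ℝ),
      |2 * ∑' P, squarePrimeTerm D m s P + Real.log (s - 1)| ≤ C := by
  have hwint : IsIntegral ℤ w := by
    refine IsIntegral.of_pow two_pos ?_
    rw [hw]
    exact (RingOfIntegers.isIntegral_coe m).algebraMap
  let σ' : 𝓞 E ≃ₐ[𝓞 F] 𝓞 E := AlgEquiv.ofRingEquiv (f := RingOfIntegers.mapRingEquiv σ)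
    fun x => RingOfIntegers.ext (σ.commutes (x : F))
  have hrank' : Module.finrank (𝓞 F) (𝓞 E) = 2 := by
    rw [← hrank, IsFractionRing.finrank_eq (𝓞 F) F (𝓞 E) E]
  obtain ⟨C, hC⟩ := exists_abs_tsum_prime_sub_le hrank' (w := ⟨w, hwint⟩) (RingOfIntegers.ext hw) σ'
    (RingOfIntegers.ext hσ) hD0 hD
  obtain ⟨C', hC'⟩ := exists_abs_tsum_prime_add_log_le E
  refine ⟨C + C', ?_⟩
  filter_upwards [hC', self_mem_nhdsWithin] with s hlog hs
  have hsq := hC s hs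
  rw [abs_le] at hlog hsq ⊢
  constructor <;> linarith

-- Half of the primes split in `F(√m)`.
theorem exists_abs_tsum_squarePrimeTerm_add_log_le {m : 𝓞 F} (hm : ¬ IsSquare (m : F)) {D : 𝓞 F}
    (hD0 : D ≠ 0) (hD : 4 * m ∣ D) :
    ∃ C : ℝ, ∀ᶠ s in 𝓝[>] (1 : ℝ),
      |2 * ∑' P, squarePrimeTerm D m s P + Real.log (s - 1)| ≤ C := by
  have : Fact (∀ r : F, r ^ 2 ≠ (m : F) + 0 * r) :=
    ⟨fun r hr => hm ⟨r, by rw [← sq, hr, zero_mul, add_zero]⟩⟩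
  have : CharZero (QuadraticAlgebra F (m : F) 0) := charZero_of_injective_algebraMap
    (algebraMap F (QuadraticAlgebra F (m : F) 0)).injective
  have : NumberField (QuadraticAlgebra F (m : F) 0) :=
    { to_finiteDimensional := Module.Finite.trans F _ }
  refine exists_abs_tsum_squarePrimeTerm_add_log_le_of_extension
    (E := QuadraticAlgebra F (m : F) 0) (QuadraticAlgebra.finrank_eq_two (m : F) 0)
    (w := ⟨0, 1⟩) ?_ (AlgEquiv.ofRingEquiv (f := starRingAut) fun x => ?_) ?_ hD0 hD <;>
  ext <;> simp [sq, QuadraticAlgebra.algebraMap_eq]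

theorem not_eventually_neg_log_sub_one_le (C : ℝ) :
    ¬ ∀ᶠ s in 𝓝[>] (1 : ℝ), -Real.log (s - 1) ≤ C := fun hle => by
  have hsub : Tendsto (fun s : ℝ => s - 1) (𝓝[>] 1) (𝓝[>] 0) := by
    refine tendsto_nhdsWithin_iff.mpr ⟨?_, ?_⟩
    · exact ((continuous_sub_right (1 : ℝ)).tendsto' 1 0 (sub_self 1)).mono_left nhdsWithin_le_nhds
    · filter_upwards [self_mem_nhdsWithin] with s hs using sub_pos.mpr (Set.mem_Ioi.mp hs)
  have hlt := (Real.tendsto_log_nhdsGT_zero.comp hsub).eventually (eventually_lt_atBot (-C))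
  obtain ⟨s, hs, hs'⟩ := (hle.and hlt).exists
  exact absurd hs (not_le.mpr (lt_neg.mpr hs'))

end QuadraticExtension

section SignedPrimeSum

open Filter Topology IsDedekindDomain NumberField

variable {F : Type*} [Field F] [NumberField F] {ρ : ℕ →*₀ ℝ} {c d : 𝓞 F}

open Classical in
theorem exists_abs_tsum_prime_sign_sub_le (hval : ∀ m, m ≠ 0 → |ρ m| = 1) (hc : c ≠ 0) (hd : d ≠ 0)
    (hρ : ∀ P : HeightOneSpectrum (𝓞 F), 4 * (c * d) ∉ P.asIdeal →
      ρ (Ideal.absNorm P.asIdeal) = (if IsSquare (Ideal.Quotient.mk P.asIdeal c) then 1 else 0) +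
        (if IsSquare (Ideal.Quotient.mk P.asIdeal d) then 1 else 0) -
        (if IsSquare (Ideal.Quotient.mk P.asIdeal (c * d)) then 1 else 0)) :
    ∃ C : ℝ, ∀ s : ℝ, 1 < s →
      |∑' P : HeightOneSpectrum (𝓞 F), ρ (Ideal.absNorm P.asIdeal) *
        (Ideal.absNorm P.asIdeal : ℝ) ^ (-s) -
        (∑' P, squarePrimeTerm (4 * (c * d)) c s P + ∑' P, squarePrimeTerm (4 * (c * d)) d s P -
          ∑' P, squarePrimeTerm (4 * (c * d)) (c * d) s P)| ≤ C := by
  have hD : 4 * (c * d) ≠ 0 := mul_ne_zero (OfNat.ofNat_ne_zero 4) (mul_ne_zero hc hd)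
  refine ⟨∑' P : HeightOneSpectrum (𝓞 F), if 4 * (c * d) ∈ P.asIdeal then 1 else 0,
    fun s hs => ?_⟩
  have hF := summable_absNorm_prime_rpow F hs
  have habs (P : HeightOneSpectrum (𝓞 F)) : |ρ (Ideal.absNorm P.asIdeal) *
      (Ideal.absNorm P.asIdeal : ℝ) ^ (-s)| = (Ideal.absNorm P.asIdeal : ℝ) ^ (-s) := by
    rw [abs_mul, hval _ (by have := two_le_absNorm P; omega), one_mul,
      abs_of_nonneg (by positivity)]
  have hsq (m : 𝓞 F) := (summable_squarePrimeTerm (4 * (c * d)) m hF).hasSum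
  have hsign := (Summable.of_abs (hF.congr fun P => (habs P).symm)).hasSum
  rw [← (hsign.sub (((hsq c).add (hsq d)).sub (hsq (c * d)))).tsum_eq, ← Real.norm_eq_abs]
  refine tsum_of_norm_bounded (summable_ite_mem hD 1).hasSum fun P => ?_
  unfold squarePrimeTerm
  by_cases hbad : 4 * (c * d) ∈ P.asIdeal
  · simp only [hbad, not_true_eq_false, false_and, if_false, if_true, add_zero, sub_zero,
      Real.norm_eq_abs, habs]
    exact Real.rpow_le_one_of_one_le_of_nonpos
      (Nat.one_le_cast.mpr (one_le_two.trans (two_le_absNorm P))) (by linarith)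
  · simp only [hbad, not_false_eq_true, true_and, if_false, hρ P hbad]
    refine le_of_eq (norm_eq_zero.mpr ?_)
    split_ifs <;> ring

open Classical in
theorem exists_abs_two_mul_tsum_prime_sign_add_log_le (hval : ∀ m, m ≠ 0 → |ρ m| = 1)
    (hc : ¬ IsSquare (c : F)) (hd : ¬ IsSquare (d : F)) (hcd : ¬ IsSquare ((c * d : 𝓞 F) : F))
    (hρ : ∀ P : HeightOneSpectrum (𝓞 F), 4 * (c * d) ∉ P.asIdeal →
      ρ (Ideal.absNorm P.asIdeal) = (if IsSquare (Ideal.Quotient.mk P.asIdeal c) then 1 else 0) +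
        (if IsSquare (Ideal.Quotient.mk P.asIdeal d) then 1 else 0) -
        (if IsSquare (Ideal.Quotient.mk P.asIdeal (c * d)) then 1 else 0)) :
    ∃ C : ℝ, ∀ᶠ s in 𝓝[>] (1 : ℝ), |2 * ∑' P : HeightOneSpectrum (𝓞 F),
      ρ (Ideal.absNorm P.asIdeal) * (Ideal.absNorm P.asIdeal : ℝ) ^ (-s) + Real.log (s - 1)|
        ≤ C := by
  have hc0 : c ≠ 0 := fun h => hc (by simp [h])
  have hd0 : d ≠ 0 := fun h => hd (by simp [h])
  have hD : 4 * (c * d) ≠ 0 := mul_ne_zero (OfNat.ofNat_ne_zero 4) (mul_ne_zero hc0 hd0)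
  obtain ⟨C, hC⟩ := exists_abs_tsum_prime_sign_sub_le hval hc0 hd0 hρ
  obtain ⟨C₁, h₁⟩ := exists_abs_tsum_squarePrimeTerm_add_log_le hc hD ⟨d, by ring⟩
  obtain ⟨C₂, h₂⟩ := exists_abs_tsum_squarePrimeTerm_add_log_le hd hD ⟨c, by ring⟩
  obtain ⟨C₃, h₃⟩ := exists_abs_tsum_squarePrimeTerm_add_log_le hcd hD dvd_rfl
  refine ⟨2 * C + C₁ + C₂ + C₃, ?_⟩
  filter_upwards [h₁, h₂, h₃, self_mem_nhdsWithin] with s hs₁ hs₂ hs₃ hs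
  have hsign := hC s hs
  rw [abs_le] at hs₁ hs₂ hs₃ hsign ⊢
  constructor <;> linarith

theorem exists_absNorm_sign_ne_one {C : ℝ} (hC : ∀ᶠ s in 𝓝[>] (1 : ℝ),
      |2 * ∑' P : HeightOneSpectrum (𝓞 F), ρ (Ideal.absNorm P.asIdeal) *
        (Ideal.absNorm P.asIdeal : ℝ) ^ (-s) + Real.log (s - 1)| ≤ C) :
    ∃ P : HeightOneSpectrum (𝓞 F), ρ (Ideal.absNorm P.asIdeal) ≠ 1 := by
  by_contra! hone
  obtain ⟨C', hC'⟩ := exists_abs_tsum_prime_add_log_le F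
  refine not_eventually_neg_log_sub_one_le (C + 2 * C') ?_
  filter_upwards [hC, hC'] with s hs hs'
  simp only [hone, one_mul] at hs
  rw [abs_le] at hs hs'
  linarith

-- The sign is `-1` at some prime. If it were trivial on principal ideals, its sum over the primes
-- would be bounded above, whereas it grows like `-log (s - 1) / 2`.
theorem exists_norm_sign_eq_neg_one (hval : ∀ m, m ≠ 0 → |ρ m| = 1) {C : ℝ}
    (hC : ∀ᶠ s in 𝓝[>] (1 : ℝ), |2 * ∑' P : HeightOneSpectrum (𝓞 F),
      ρ (Ideal.absNorm P.asIdeal) * (Ideal.absNorm P.asIdeal : ℝ) ^ (-s) + Real.log (s - 1)|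
        ≤ C) :
    ∃ γ : 𝓞 F, γ ≠ 0 ∧ ρ (Algebra.norm ℤ γ).natAbs = -1 := by
  have neg_one_of_ne {m : ℕ} (hm : m ≠ 0) (h : ρ m ≠ 1) : ρ m = -1 :=
    ((abs_eq zero_le_one).mp (hval m hm)).resolve_left h
  obtain ⟨P, hP⟩ := exists_absNorm_sign_ne_one hC
  by_contra! hno
  have hprin (γ : 𝓞 F) (hγ : γ ≠ 0) : ρ (Ideal.absNorm (Ideal.span {γ})) = 1 := by
    rw [Ideal.absNorm_span_singleton]
    by_contra h
    exact hno γ hγ (neg_one_of_ne (Int.natAbs_ne_zero.mpr (Algebra.norm_ne_zero_iff.mpr hγ)) h)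
  obtain ⟨C', hC'⟩ := exists_tsum_prime_sign_le hval P.ne_bot
    (neg_one_of_ne (Ideal.absNorm_eq_zero_iff.not.mpr P.ne_bot) hP) hprin
  refine not_eventually_neg_log_sub_one_le (C + 2 * C') ?_
  filter_upwards [hC, self_mem_nhdsWithin] with s hs hs1
  rw [abs_le] at hs
  linarith [hC' s hs1]

end SignedPrimeSum

section NonresidueSign

open Classical in
/-- The completely multiplicative function sending the primes modulo which neither `c` nor `d` is
a square to `-1`, and all other primes to `1`. -/
noncomputable def nonresidueSign (c d : ℕ) : ℕ →*₀ ℝ where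
  toFun n := if n = 0 then 0 else (n.primeFactorsList.map fun p =>
    if IsSquare (c : ZMod p) ∨ IsSquare (d : ZMod p) then (1 : ℝ) else -1).prod
  map_zero' := if_pos rfl
  map_one' := by simp
  map_mul' m n := by
    rcases eq_or_ne m 0 with rfl | hm
    · simp
    rcases eq_or_ne n 0 with rfl | hn
    · simp
    rw [if_neg hm, if_neg hn, if_neg (mul_ne_zero hm hn),
      ((Nat.perm_primeFactorsList_mul hm hn).map _).prod_eq, List.map_append, List.prod_append]

variable {c d : ℕ}

open Classical in
theorem nonresidueSign_prime {p : ℕ} (hp : p.Prime) : nonresidueSign c d p =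
    if IsSquare (c : ZMod p) ∨ IsSquare (d : ZMod p) then 1 else -1 := by
  simp [nonresidueSign, hp.ne_zero, Nat.primeFactorsList_prime hp]

theorem abs_nonresidueSign {n : ℕ} (hn : n ≠ 0) : |nonresidueSign c d n| = 1 := by
  induction n using Nat.recOnMul with
  | zero => exact absurd rfl hn
  | one => rw [map_one, abs_one]
  | prime p hp =>
    rw [nonresidueSign_prime hp]
    split_ifs <;> simp
  | mul a b ha hb =>
    rw [map_mul, abs_mul, ha (left_ne_zero_of_mul hn), hb (right_ne_zero_of_mul hn), one_mul]

theorem nonresidueSign_sq {n : ℕ} (hn : n ≠ 0) : nonresidueSign c d n ^ 2 = 1 := by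
  rw [← sq_abs, abs_nonresidueSign hn, one_pow]

theorem nonresidueSign_eq_one {n : ℕ} (hn : n ≠ 0)
    (h : ∀ p : ℕ, p.Prime → p ∣ n → IsSquare (c : ZMod p) ∨ IsSquare (d : ZMod p)) :
    nonresidueSign c d n = 1 := by
  induction n using Nat.recOnMul with
  | zero => exact absurd rfl hn
  | one => rw [map_one]
  | prime p hp => rw [nonresidueSign_prime hp, if_pos (h p hp dvd_rfl)]
  | mul a b ha hb =>
    rw [map_mul, ha (left_ne_zero_of_mul hn) fun p hp hpa => h p hp (hpa.mul_right b),
      hb (right_ne_zero_of_mul hn) fun p hp hpb => h p hp (hpb.mul_left a), one_mul]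

theorem nonresidueSign_eq_legendreSym [Fact c.Prime] {n : ℕ} (hn : (n : ZMod c) ≠ 0)
    (h : ∀ p : ℕ, p.Prime → p ∣ n →
      (IsSquare (p : ZMod c) ↔ IsSquare (c : ZMod p) ∨ IsSquare (d : ZMod p))) :
    nonresidueSign c d n = legendreSym c n := by
  induction n using Nat.recOnMul with
  | zero => exact absurd Nat.cast_zero hn
  | one => rw [map_one, Nat.cast_one, legendreSym.at_one, Int.cast_one]
  | prime p hp =>
    rw [nonresidueSign_prime hp]
    split_ifs with hsq
    · rw [(legendreSym.eq_one_iff' c hn).mpr ((h p hp dvd_rfl).mpr hsq), Int.cast_one]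
    · rw [(legendreSym.eq_neg_one_iff' c).mpr fun hp' => hsq ((h p hp dvd_rfl).mp hp'),
        Int.cast_neg, Int.cast_one]
  | mul a b ha hb =>
    rw [Nat.cast_mul] at hn
    rw [map_mul, ha (left_ne_zero_of_mul hn) fun p hp hpa => h p hp (hpa.mul_right b),
      hb (right_ne_zero_of_mul hn) fun p hp hpb => h p hp (hpb.mul_left a), Nat.cast_mul,
      legendreSym.mul, Int.cast_mul]

end NonresidueSign

section BinaryForm

variable {c d : ℕ}

theorem intCast_ne_zero_of_isCoprime {R : Type*} [CommRing R] [Nontrivial R] {x y : ℤ}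
    (hxy : IsCoprime x y) (hx : (x : R) = 0) : (y : R) ≠ 0 := fun hy => by
  have := hxy.map (Int.castRingHom R)
  rw [eq_intCast, eq_intCast, hx, hy] at this
  exact not_isCoprime_zero_zero this

theorem isSquare_zmod_of_dvd_sub {p : ℕ} (hp : p.Prime) {m x y : ℤ} (hxy : IsCoprime x y)
    (h : (p : ℤ) ∣ x ^ 2 - m * y ^ 2) : IsSquare (m : ZMod p) := by
  have : Fact p.Prime := ⟨hp⟩
  have heq : (x : ZMod p) ^ 2 = m * (y : ZMod p) ^ 2 := by
    have := (ZMod.intCast_zmod_eq_zero_iff_dvd _ p).mpr h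
    push_cast at this
    exact sub_eq_zero.mp this
  have hy : (y : ZMod p) ≠ 0 := fun hy => by
    have hx : (x : ZMod p) = 0 := by simpa [hy] using heq
    exact intCast_ne_zero_of_isCoprime hxy hx hy
  refine ⟨x / y, ?_⟩
  field_simp
  exact heq.symm

theorem nonresidueSign_sq_sub_mul_sq_of_isCoprime {m : ℤ}
    (h : ∀ x y : ℤ, IsCoprime x y → x ^ 2 - m * y ^ 2 ≠ 0 →
      nonresidueSign c d (x ^ 2 - m * y ^ 2).natAbs = 1)
    (x y : ℤ) (hxy : x ^ 2 - m * y ^ 2 ≠ 0) :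
    nonresidueSign c d (x ^ 2 - m * y ^ 2).natAbs = 1 := by
  have hg : 0 < Int.gcd x y := by
    rw [Int.gcd_pos_iff]
    by_contra! h0
    simp [h0] at hxy
  obtain ⟨x', y', hcop, hx, hy⟩ := Int.exists_gcd_one hg
  have heq : x ^ 2 - m * y ^ 2 = (x' ^ 2 - m * y' ^ 2) * (Int.gcd x y : ℤ) ^ 2 := by
    calc x ^ 2 - m * y ^ 2 = (x' * Int.gcd x y) ^ 2 - m * (y' * Int.gcd x y) ^ 2 := by
          rw [← hx, ← hy]
      _ = _ := by ring
  have h0 : x' ^ 2 - m * y' ^ 2 ≠ 0 := fun h0 => hxy (by rw [heq, h0, zero_mul])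
  rw [heq, Int.natAbs_mul, map_mul, h x' y' (Int.isCoprime_iff_gcd_eq_one.mpr hcop) h0,
    Int.natAbs_pow, Int.natAbs_natCast, map_pow, nonresidueSign_sq hg.ne', one_mul]

theorem nonresidueSign_sq_sub_mul_sq_left (x y : ℤ) (hxy : x ^ 2 - (c : ℤ) * y ^ 2 ≠ 0) :
    nonresidueSign c d (x ^ 2 - (c : ℤ) * y ^ 2).natAbs = 1 := by
  refine nonresidueSign_sq_sub_mul_sq_of_isCoprime (fun x y hcop h0 => ?_) x y hxy
  refine nonresidueSign_eq_one (Int.natAbs_ne_zero.mpr h0) fun p hp hdvd => Or.inl ?_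
  exact_mod_cast isSquare_zmod_of_dvd_sub hp hcop (Int.natCast_dvd.mpr hdvd)

theorem nonresidueSign_sq_sub_mul_sq_right (x y : ℤ) (hxy : x ^ 2 - (d : ℤ) * y ^ 2 ≠ 0) :
    nonresidueSign c d (x ^ 2 - (d : ℤ) * y ^ 2).natAbs = 1 := by
  refine nonresidueSign_sq_sub_mul_sq_of_isCoprime (fun x y hcop h0 => ?_) x y hxy
  refine nonresidueSign_eq_one (Int.natAbs_ne_zero.mpr h0) fun p hp hdvd => Or.inr ?_
  exact_mod_cast isSquare_zmod_of_dvd_sub hp hcop (Int.natCast_dvd.mpr hdvd)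

theorem isSquare_left_of_isSquare_mul {K : Type*} [CommGroupWithZero K] {a b : K} (hb : b ≠ 0)
    (hab : IsSquare (a * b)) (h : IsSquare b) : IsSquare a :=
  mul_div_cancel_right₀ a hb ▸ hab.div h

theorem isSquare_intCast_natAbs {R : Type*} [CommRing R] (hR : IsSquare (-1 : R)) {z : ℤ}
    (hz : IsSquare (z : R)) : IsSquare (z.natAbs : R) := by
  rcases Int.natAbs_eq z with h | h
  · rwa [h, Int.cast_natCast] at hz
  · rw [h, Int.cast_neg, Int.cast_natCast] at hz
    simpa using hR.mul hz

variable (hc : c.Prime) (hd : d.Prime) (hc8 : c % 8 = 1) (hd2 : d ≠ 2) (hdc : IsSquare (d : ZMod c))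

include hc hd hc8 hd2 hdc

theorem isSquare_left_or_right_iff {p : ℕ} (hp : p.Prime)
    (hcd : IsSquare ((c * d : ℕ) : ZMod p)) :
    IsSquare (p : ZMod c) ↔ IsSquare (c : ZMod p) ∨ IsSquare (d : ZMod p) := by
  have : Fact c.Prime := ⟨hc⟩
  have : Fact p.Prime := ⟨hp⟩
  have : Fact d.Prime := ⟨hd⟩
  rcases eq_or_ne p 2 with rfl | hp2
  · refine iff_of_true ?_ (Or.inl (FiniteField.isSquare_of_char_two (ZMod.ringChar_zmod_n 2) _))
    exact_mod_cast (ZMod.exists_sq_eq_two_iff (by omega)).mpr (Or.inl hc8)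
  rw [ZMod.exists_sq_eq_prime_iff_of_mod_four_eq_one (by omega) hp2]
  rcases eq_or_ne p d with rfl | hpd
  · refine iff_of_true ?_ (Or.inr ?_)
    · rwa [← ZMod.exists_sq_eq_prime_iff_of_mod_four_eq_one (by omega) hd2]
    · rw [CharP.cast_eq_zero]
      exact IsSquare.zero
  · refine (or_iff_left_of_imp fun h => ?_).symm
    rw [Nat.cast_mul] at hcd
    exact isSquare_left_of_isSquare_mul (ZMod.prime_ne_zero p d hpd) hcd h

theorem nonresidueSign_eq_one_of_isSquare {n : ℕ} (hn : (n : ZMod c) ≠ 0)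
    (hsq : IsSquare (n : ZMod c))
    (hcd : ∀ p : ℕ, p.Prime → p ∣ n → IsSquare ((c * d : ℕ) : ZMod p)) :
    nonresidueSign c d n = 1 := by
  have : Fact c.Prime := ⟨hc⟩
  rw [nonresidueSign_eq_legendreSym hn fun p hp hpn =>
      isSquare_left_or_right_iff hc hd hc8 hd2 hdc hp (hcd p hp hpn),
    (legendreSym.eq_one_iff' c hn).mpr hsq, Int.cast_one]

theorem nonresidueSign_natAbs_eq_one_of_isSquare {z : ℤ} (hz : (z : ZMod c) ≠ 0)
    (hsq : IsSquare (z : ZMod c))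
    (hcd : ∀ p : ℕ, p.Prime → (p : ℤ) ∣ z → IsSquare ((c * d : ℕ) : ZMod p)) :
    nonresidueSign c d z.natAbs = 1 := by
  have : Fact c.Prime := ⟨hc⟩
  refine nonresidueSign_eq_one_of_isSquare hc hd hc8 hd2 hdc ?_
    (isSquare_intCast_natAbs (ZMod.exists_sq_eq_neg_one_iff.mpr (by omega)) hsq)
    fun p hp hpz => hcd p hp (Int.natCast_dvd.mpr hpz)
  rwa [Ne, ZMod.natCast_eq_zero_iff, ← Int.natCast_dvd, ← ZMod.intCast_zmod_eq_zero_iff_dvd]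

-- If `c ∣ x`, the cofactor of `c` in the value is `-d y²` modulo `c`; otherwise the value is `x²`
-- modulo `c`.
theorem nonresidueSign_sq_sub_mul_sq_mul (hdc0 : d ≠ c) (x y : ℤ)
    (hxy : x ^ 2 - ((c * d : ℕ) : ℤ) * y ^ 2 ≠ 0) :
    nonresidueSign c d (x ^ 2 - ((c * d : ℕ) : ℤ) * y ^ 2).natAbs = 1 := by
  have : Fact c.Prime := ⟨hc⟩
  have : Fact d.Prime := ⟨hd⟩
  refine nonresidueSign_sq_sub_mul_sq_of_isCoprime (fun x y hcop _ => ?_) x y hxy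
  have hcd (p : ℕ) (hp : p.Prime) (hdvd : (p : ℤ) ∣ x ^ 2 - ((c * d : ℕ) : ℤ) * y ^ 2) :
      IsSquare ((c * d : ℕ) : ZMod p) := by
    exact_mod_cast isSquare_zmod_of_dvd_sub hp hcop hdvd
  by_cases hx : (x : ZMod c) = 0
  · obtain ⟨x', rfl⟩ := (ZMod.intCast_zmod_eq_zero_iff_dvd x c).mp hx
    have hfac : (c * x') ^ 2 - ((c * d : ℕ) : ℤ) * y ^ 2 = c * (c * x' ^ 2 - d * y ^ 2) := by
      push_cast
      ring
    have hy : (y : ZMod c) ≠ 0 := intCast_ne_zero_of_isCoprime hcop hx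
    have hcast : ((c * x' ^ 2 - d * y ^ 2 : ℤ) : ZMod c) = -1 * (d * (y : ZMod c) ^ 2) := by
      push_cast
      rw [CharP.cast_eq_zero]
      ring
    have hcofactor : nonresidueSign c d (c * x' ^ 2 - d * y ^ 2 : ℤ).natAbs = 1 := by
      refine nonresidueSign_natAbs_eq_one_of_isSquare hc hd hc8 hd2 hdc ?_ ?_
        fun p hp hdvd => hcd p hp (hfac ▸ hdvd.mul_left _)
      · rw [hcast]
        exact mul_ne_zero (neg_ne_zero.mpr one_ne_zero)
          (mul_ne_zero (ZMod.prime_ne_zero c d hdc0.symm) (pow_ne_zero 2 hy))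
      · rw [hcast]
        exact (ZMod.exists_sq_eq_neg_one_iff.mpr (by omega)).mul (hdc.mul (IsSquare.sq _))
    rw [hfac, Int.natAbs_mul, map_mul, Int.natAbs_natCast, hcofactor, mul_one,
      nonresidueSign_prime hc, if_pos (Or.inr hdc)]
  · have hcast : ((x ^ 2 - ((c * d : ℕ) : ℤ) * y ^ 2 : ℤ) : ZMod c) = (x : ZMod c) ^ 2 := by
      push_cast
      rw [CharP.cast_eq_zero]
      ring
    refine nonresidueSign_natAbs_eq_one_of_isSquare hc hd hc8 hd2 hdc ?_ ?_ hcd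
    · rw [hcast]
      exact pow_ne_zero 2 hx
    · rw [hcast]
      exact IsSquare.sq _

end BinaryForm

section ResidueField

theorem pow_prime_pow_half {M : Type*} [CommMonoid M] {p : ℕ} (hp : Odd p) {a : M}
    (ha : a ^ p = a) (f : ℕ) : a ^ (p ^ f / 2) = (a ^ (p / 2)) ^ f := by
  induction f with
  | zero => simp
  | succ f ih =>
    have hdiv : p ^ (f + 1) / 2 = p * (p ^ f / 2) + p / 2 := by
      obtain ⟨j, hj⟩ := hp.pow (n := f)
      rw [show p ^ (f + 1) = 2 * (p * j) + p by rw [pow_succ, hj]; ring,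
        Nat.mul_add_div two_pos, show p ^ f / 2 = j by omega]
    rw [hdiv, pow_add, pow_mul, ha, ih, pow_succ]

section FiniteField

variable {κ : Type*} [Field κ] [Fintype κ] {p f : ℕ} [Fact p.Prime] [CharP κ p]

theorem isSquare_natCast_iff_legendreSym_pow (hp2 : p ≠ 2) (hcard : Fintype.card κ = p ^ f)
    {m : ℕ} (hm : (m : ZMod p) ≠ 0) : IsSquare (m : κ) ↔ legendreSym p m ^ f = 1 := by
  have hchar : ringChar κ ≠ 2 := by rwa [ringChar.eq κ p]
  have hm' : (m : κ) ≠ 0 := by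
    rwa [Ne, CharP.cast_eq_zero_iff κ p, ← ZMod.natCast_eq_zero_iff]
  have hfermat : (m : κ) ^ p = m := map_natCast (frobenius κ p) m
  have heuler : (m : κ) ^ (p / 2) = (legendreSym p m : ℤ) := by
    have := congrArg (ZMod.castHom dvd_rfl κ) (legendreSym.eq_pow p m)
    rw [map_intCast, map_pow, map_intCast, Int.cast_natCast] at this
    exact this.symm
  rw [FiniteField.isSquare_iff hchar hm', hcard,
    pow_prime_pow_half ((Fact.out : p.Prime).odd_of_ne_two hp2) hfermat, heuler, ← Int.cast_pow]
  have hone : legendreSym p m ^ f = 1 ∨ legendreSym p m ^ f = -1 := by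
    rw [← sq_eq_one_iff, ← pow_mul, mul_comm, pow_mul,
      legendreSym.sq_one p (by rwa [Int.cast_natCast]), one_pow]
  rcases hone with h | h
  · simp [h]
  · simp [h, Ring.neg_one_ne_one_of_char_ne_two hchar]

open Classical in
theorem nonresidueSign_prime_pow {c d : ℕ} (hp2 : p ≠ 2) (hcard : Fintype.card κ = p ^ f)
    (hc : (c : ZMod p) ≠ 0) (hd : (d : ZMod p) ≠ 0) :
    nonresidueSign c d (p ^ f) = (if IsSquare (c : κ) then 1 else 0) +
      (if IsSquare (d : κ) then 1 else 0) - (if IsSquare ((c * d : ℕ) : κ) then 1 else 0) := by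
  have hcd : ((c * d : ℕ) : ZMod p) ≠ 0 := by
    rw [Nat.cast_mul]
    exact mul_ne_zero hc hd
  have hc' : ((c : ℤ) : ZMod p) ≠ 0 := by exact_mod_cast hc
  have hd' : ((d : ℤ) : ZMod p) ≠ 0 := by exact_mod_cast hd
  simp only [isSquare_natCast_iff_legendreSym_pow hp2 hcard hc,
    isSquare_natCast_iff_legendreSym_pow hp2 hcard hd,
    isSquare_natCast_iff_legendreSym_pow hp2 hcard hcd]
  rw [map_pow, nonresidueSign_prime Fact.out, Nat.cast_mul, legendreSym.mul,
    ← legendreSym.eq_one_iff' p hc, ← legendreSym.eq_one_iff' p hd]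
  rcases legendreSym.eq_one_or_neg_one p hc' with h1 | h1 <;>
  rcases legendreSym.eq_one_or_neg_one p hd' with h2 | h2 <;>
  rcases Nat.even_or_odd f with hf | hf <;>
  rw [h1, h2] <;> norm_num [hf.neg_one_pow]

end FiniteField

open NumberField IsDedekindDomain

variable {F : Type*} [Field F] [NumberField F] {c d : ℕ}

open Classical in
theorem nonresidueSign_absNorm (P : HeightOneSpectrum (𝓞 F))
    (hP : 4 * ((c : 𝓞 F) * d) ∉ P.asIdeal) :
    nonresidueSign c d (Ideal.absNorm P.asIdeal) =
      (if IsSquare (Ideal.Quotient.mk P.asIdeal (c : 𝓞 F)) then 1 else 0) +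
        (if IsSquare (Ideal.Quotient.mk P.asIdeal (d : 𝓞 F)) then 1 else 0) -
        (if IsSquare (Ideal.Quotient.mk P.asIdeal ((c : 𝓞 F) * d)) then 1 else 0) := by
  have := P.isMaximal
  let : Field (𝓞 F ⧸ P.asIdeal) := Ideal.Quotient.field _
  have : Finite (𝓞 F ⧸ P.asIdeal) := Ideal.finiteQuotientOfFreeOfNeBot _ P.ne_bot
  have := Fintype.ofFinite (𝓞 F ⧸ P.asIdeal)
  obtain ⟨p, f, -, hpP, hp, hf⟩ := Ideal.exists_prime_and_absNorm_eq_pow P.asIdeal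
  have : Fact p.Prime := ⟨hp⟩
  have : CharP (𝓞 F ⧸ P.asIdeal) p := by
    refine (CharP.charP_iff_prime_eq_zero hp).mpr ?_
    rwa [← map_natCast (Ideal.Quotient.mk P.asIdeal), Ideal.Quotient.eq_zero_iff_mem]
  have hdvd : ¬ p ∣ 4 * (c * d) := fun h =>
    hP (P.asIdeal.mem_of_dvd (by exact_mod_cast Nat.cast_dvd_cast h) hpP)
  have hp2 : p ≠ 2 := by
    rintro rfl
    exact hdvd (Dvd.dvd.mul_right (by norm_num) _)
  have hc : (c : ZMod p) ≠ 0 := fun h =>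
    hdvd ((((ZMod.natCast_eq_zero_iff c p).mp h).mul_right d).mul_left 4)
  have hd : (d : ZMod p) ≠ 0 := fun h =>
    hdvd ((((ZMod.natCast_eq_zero_iff d p).mp h).mul_left c).mul_left 4)
  have hcard : Fintype.card (𝓞 F ⧸ P.asIdeal) = p ^ f := by
    rw [← hf, Ideal.absNorm_apply, Submodule.cardQuot_apply, Nat.card_eq_fintype_card]
  simp only [← Nat.cast_mul, map_natCast]
  rw [hf]
  exact nonresidueSign_prime_pow hp2 hcard hc hd

theorem exists_nonresidueSign_norm_eq_neg_one (hc : ¬ IsSquare (c : F)) (hd : ¬ IsSquare (d : F))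
    (hcd : ¬ IsSquare ((c * d : ℕ) : F)) :
    ∃ γ : 𝓞 F, γ ≠ 0 ∧ nonresidueSign c d (Algebra.norm ℤ γ).natAbs = -1 := by
  have hcoe (n : ℕ) : ((n : 𝓞 F) : F) = n := map_natCast _ n
  have hval (n : ℕ) (hn : n ≠ 0) : |nonresidueSign c d n| = 1 := abs_nonresidueSign hn
  obtain ⟨C, hC⟩ := exists_abs_two_mul_tsum_prime_sign_add_log_le hval (by rwa [hcoe])
    (by rwa [hcoe]) (by rwa [← Nat.cast_mul, hcoe]) nonresidueSign_absNorm
  exact exists_norm_sign_eq_neg_one hval hC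

end ResidueField

section RationalSign

variable {c d : ℕ}

/-- The extension of `nonresidueSign` to the rational numbers. -/
noncomputable def ratNonresidueSign (c d : ℕ) : ℚ →*₀ ℝ :=
  (IsLocalization.toLocalizationMap (nonZeroDivisors ℤ) ℚ).lift₀
    ((nonresidueSign c d).comp Int.natAbsHom) fun z => isUnit_iff_ne_zero.mpr <| abs_pos.mp <| by
      change 0 < |nonresidueSign c d z.1.natAbs|
      rw [abs_nonresidueSign (Int.natAbs_ne_zero.mpr (nonZeroDivisors.coe_ne_zero z))]
      exact one_pos

theorem ratNonresidueSign_intCast (z : ℤ) :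
    ratNonresidueSign c d z = nonresidueSign c d z.natAbs :=
  Submonoid.LocalizationMap.lift_eq ..

theorem ratNonresidueSign_sq_sub_mul_sq {m : ℤ}
    (h : ∀ x y : ℤ, x ^ 2 - m * y ^ 2 ≠ 0 → nonresidueSign c d (x ^ 2 - m * y ^ 2).natAbs = 1)
    (X Y : ℚ) (hXY : X ^ 2 - m * Y ^ 2 ≠ 0) : ratNonresidueSign c d (X ^ 2 - m * Y ^ 2) = 1 := by
  have hX : (X.den : ℚ) ≠ 0 := Nat.cast_ne_zero.mpr X.den_nz
  have hY : (Y.den : ℚ) ≠ 0 := Nat.cast_ne_zero.mpr Y.den_nz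
  have heq : ((((X.num * Y.den) ^ 2 - m * (Y.num * X.den) ^ 2 : ℤ)) : ℚ) =
      (X ^ 2 - m * Y ^ 2) * ((X.den * Y.den : ℕ) : ℤ) ^ 2 := by
    push_cast
    rw [← Rat.mul_den_eq_num X, ← Rat.mul_den_eq_num Y]
    ring
  have hne : (X.num * Y.den) ^ 2 - m * (Y.num * X.den) ^ 2 ≠ 0 := by
    rw [← Int.cast_ne_zero (α := ℚ), heq]
    push_cast
    exact mul_ne_zero hXY (pow_ne_zero 2 (mul_ne_zero hX hY))
  have hsign := congrArg (ratNonresidueSign c d) heq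
  rw [ratNonresidueSign_intCast, h _ _ hne, map_mul, map_pow, ratNonresidueSign_intCast,
    Int.natAbs_natCast, nonresidueSign_sq (mul_ne_zero X.den_nz Y.den_nz), mul_one] at hsign
  exact hsign.symm

end RationalSign

section NormDescent

-- Over `A[√m]` the matrix is `(x + √m y) (x - √m y)`, and the two determinants are conjugate.
theorem exists_det_sq_sub_smul_sq_eq {A ι : Type*} [CommRing A] [Fintype ι] [DecidableEq ι] (m : A)
    {x y : Matrix ι ι A} (hxy : Commute x y) :
    ∃ X Y : A, (x ^ 2 - m • y ^ 2).det = X ^ 2 - m * Y ^ 2 := by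
  let w : QuadraticAlgebra A m 0 := ⟨0, 1⟩
  let i : A →+* QuadraticAlgebra A m 0 := algebraMap A _
  let D : QuadraticAlgebra A m 0 := (i.mapMatrix x + w • i.mapMatrix y).det
  have hw : w * w = i m := by ext <;> simp [w, i, QuadraticAlgebra.algebraMap_eq]
  have star_det : star D = (i.mapMatrix x - w • i.mapMatrix y).det := by
    change starRingEnd _ D = _
    rw [RingHom.map_det]
    congr 1
    ext a b <;> simp [i, w, starRingEnd_apply, QuadraticAlgebra.algebraMap_eq]
  have factorization : (i.mapMatrix x + w • i.mapMatrix y) * (i.mapMatrix x - w • i.mapMatrix y) =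
      i.mapMatrix (x ^ 2 - m • y ^ 2) := by
    have map_smul_sq : i.mapMatrix (m • y ^ 2) = (w * w) • (i.mapMatrix y * i.mapMatrix y) := by
      rw [hw, ← map_mul, ← sq]
      ext a b <;> simp [i]
    rw [map_sub, map_smul_sq, map_pow, mul_sub, add_mul, add_mul, mul_smul_comm, mul_smul_comm,
      smul_mul_assoc, smul_mul_assoc, smul_smul, (hxy.map i.mapMatrix).eq, sq]
    abel
  refine ⟨D.re, D.im, congrArg QuadraticAlgebra.re (?_ : i _ = i _)⟩
  calc i (x ^ 2 - m • y ^ 2).det = D * star D := by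
        rw [RingHom.map_det, ← factorization, Matrix.det_mul, star_det]
    _ = i (D.re ^ 2 - m * D.im ^ 2) := by
        rw [← QuadraticAlgebra.algebraMap_norm_eq_mul_star, QuadraticAlgebra.norm_def]
        congr 1
        ring

theorem exists_norm_sq_sub_mul_sq_eq {A B : Type*} [CommRing A] [CommRing B] [Algebra A B]
    [Module.Free A B] [Module.Finite A B] (m : A) (x y : B) :
    ∃ X Y : A, Algebra.norm A (x ^ 2 - algebraMap A B m * y ^ 2) = X ^ 2 - m * Y ^ 2 := by
  classical
  let b := Module.Free.chooseBasis A B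
  obtain ⟨X, Y, h⟩ :=
    exists_det_sq_sub_smul_sq_eq m ((Commute.all x y).map (Algebra.leftMulMatrix b))
  refine ⟨X, Y, ?_⟩
  rw [Algebra.norm_eq_matrix_det b, ← h, map_sub, ← Algebra.smul_def, map_smul, map_pow, map_pow]

end NormDescent

section NormSign

open NumberField

variable {k : Type*} [Field k] [NumberField k] {c d : ℕ}

/-- The sign `ratNonresidueSign` of the norm from `k` to `ℚ`. -/
noncomputable def normSign (c d : ℕ) : k →*₀ ℝ :=
  (ratNonresidueSign c d).comp ⟨⟨Algebra.norm ℚ, Algebra.norm_zero⟩, map_one _, map_mul _⟩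

theorem normSign_apply (x : k) : normSign c d x = ratNonresidueSign c d (Algebra.norm ℚ x) := rfl

theorem normSign_sq_sub_mul_sq {m : ℕ}
    (h : ∀ x y : ℤ, x ^ 2 - m * y ^ 2 ≠ 0 → nonresidueSign c d (x ^ 2 - m * y ^ 2).natAbs = 1)
    (x y : k) (hxy : x ^ 2 - m * y ^ 2 ≠ 0) : normSign c d (x ^ 2 - m * y ^ 2) = 1 := by
  obtain ⟨X, Y, hXY⟩ := exists_norm_sq_sub_mul_sq_eq ((m : ℤ) : ℚ) x y
  rw [map_intCast, Int.cast_natCast] at hXY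
  rw [normSign_apply, hXY]
  exact ratNonresidueSign_sq_sub_mul_sq h X Y (hXY ▸ Algebra.norm_ne_zero_iff.mpr hxy)

theorem isSquare_or_isSquare_mul_of_isSquare_algebraMap {K : Type*} [Field K] [NeZero (2 : K)]
    {e m : K} (h : IsSquare (algebraMap K (QuadraticAlgebra K e 0) m)) :
    IsSquare m ∨ IsSquare (m * e) := by
  obtain ⟨s, hs⟩ := h
  have hre : m = s.re * s.re + e * s.im * s.im := by
    simpa [QuadraticAlgebra.algebraMap_eq] using congrArg QuadraticAlgebra.re hs
  have him : 2 * (s.re * s.im) = 0 := by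
    have : 0 = s.re * s.im + s.im * s.re := by
      simpa [QuadraticAlgebra.algebraMap_eq] using congrArg QuadraticAlgebra.im hs
    linear_combination -this
  rcases mul_eq_zero.mp ((mul_eq_zero.mp him).resolve_left two_ne_zero) with h0 | h0
  · exact Or.inr ⟨e * s.im, by rw [hre, h0]; ring⟩
  · exact Or.inl ⟨s.re, by rw [hre, h0]; ring⟩

theorem algebraNorm_quadraticAlgebra {A : Type*} [CommRing A] {a b : A}
    (z : QuadraticAlgebra A a b) : Algebra.norm A z = z.norm := by
  rw [← QuadraticAlgebra.det_toLinearMap_eq_norm, Algebra.norm_apply]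
  rfl

theorem exists_normSign_norm_eq_neg_one {E : Type*} [Field E] [NumberField E] [Algebra k E]
    (hc : ¬ IsSquare (algebraMap k E c)) (hd : ¬ IsSquare (algebraMap k E d))
    (hcd : ¬ IsSquare (algebraMap k E (c * d))) :
    ∃ z : E, normSign c d (Algebra.norm k z) = -1 := by
  obtain ⟨γ, -, hγ⟩ := exists_nonresidueSign_norm_eq_neg_one (F := E) (c := c) (d := d)
    (by rwa [map_natCast] at hc) (by rwa [map_natCast] at hd)
    (by rwa [← Nat.cast_mul, map_natCast] at hcd)
  refine ⟨γ, ?_⟩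
  rw [normSign_apply, Algebra.norm_norm, ← Algebra.coe_norm_int, ratNonresidueSign_intCast, hγ]

theorem exists_normSign_eq_neg_one (hc0 : c ≠ 0) (hc : ¬ IsSquare (c : k)) (hd : ¬ IsSquare (d : k))
    (hcd : ¬ IsSquare ((c : k) * d)) {t : k} (ht : ¬ IsSquare t) (hct : ¬ IsSquare (c * t))
    (hdt : ¬ IsSquare (d * t)) (hcdt : ¬ IsSquare (c * d * t)) :
    ∃ x y : k, normSign c d (x ^ 2 - c * t * y ^ 2) = -1 := by
  let E := QuadraticAlgebra k (c * t) 0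
  have : Fact (∀ r : k, r ^ 2 ≠ c * t + 0 * r) := ⟨fun r hr => hct ⟨r, by linear_combination -hr⟩⟩
  have : CharZero E := charZero_of_injective_algebraMap (algebraMap k E).injective
  have : NumberField E := { to_finiteDimensional := Module.Finite.trans k E }
  have hcc : (c : k) * c ≠ 0 := by simpa using hc0
  have of_mul_sq : ∀ {u : k}, IsSquare (u * (c * c)) → IsSquare u := fun h =>
    isSquare_left_of_isSquare_mul hcc h ⟨c, rfl⟩
  have nonsquare : ∀ {m : k}, ¬ IsSquare m → ¬ IsSquare (m * (c * t)) →
      ¬ IsSquare (algebraMap k E m) := fun hm hmct h =>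
    (isSquare_or_isSquare_mul_of_isSquare_algebraMap h).elim hm hmct
  obtain ⟨z, hz⟩ := exists_normSign_norm_eq_neg_one (k := k) (c := c) (d := d) (E := E)
    (nonsquare hc fun h => ht (of_mul_sq (by convert h using 1; ring)))
    (nonsquare hd fun h => hcdt (by convert h using 1; ring))
    (nonsquare hcd fun h => hdt (of_mul_sq (by convert h using 1; ring)))
  refine ⟨z.re, z.im, ?_⟩
  rw [← hz, algebraNorm_quadraticAlgebra, QuadraticAlgebra.norm_def]
  congr 1
  ring

end NormSign

section SmallNormForm

variable {R ι : Type*} [CommRing R]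

theorem exists_mem_coordBox [Fintype ι] (b : Module.Basis ι ℤ R) (z : R) :
    ∃ X : ℕ, z ∈ coordBox b X :=
  ⟨∑ i, (b.repr z i).natAbs, mem_coordBox.mpr fun i => by
    rw [Int.abs_eq_natAbs]
    exact_mod_cast Finset.single_le_sum (f := fun i => (b.repr z i).natAbs)
      (fun _ _ => Nat.zero_le _) (Finset.mem_univ i)⟩

theorem exists_sub_mul_mem_ideal [Fintype ι] (b : Module.Basis ι ℤ R) (P : Ideal R)
    [Finite (R ⧸ P)] (s : R) {M : ℕ} (hM : Nat.card (R ⧸ P) < (M + 1) ^ (2 * Fintype.card ι)) :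
    ∃ x ∈ coordBox b M, ∃ y ∈ coordBox b M, (x ≠ 0 ∨ y ≠ 0) ∧ x - s * y ∈ P := by
  let toR (f : ι → ι ⊕ ι) : (ι ⊕ ι → ℤ) →ₗ[ℤ] R :=
    b.equivFun.symm.toLinearMap ∘ₗ LinearMap.funLeft ℤ ℤ f
  let φ : (ι ⊕ ι → ℤ) →ₗ[ℤ] R := toR Sum.inl - LinearMap.mulLeft ℤ s ∘ₗ toR Sum.inr
  obtain ⟨v, hv0, hvM, hv⟩ := exists_ne_zero_abs_le_map_eq_zero
    ((Ideal.Quotient.mk P).toAddMonoidHom.comp φ.toAddMonoidHom) M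
    (by rwa [Fintype.card_sum, ← two_mul])
  have repr_toR (f : ι → ι ⊕ ι) (i : ι) : b.repr (toR f v) i = v (f i) :=
    congrFun (b.equivFun.apply_symm_apply _) i
  have toR_mem (f : ι → ι ⊕ ι) : toR f v ∈ coordBox b M :=
    mem_coordBox.mpr fun i => by rw [repr_toR]; exact hvM _
  refine ⟨_, toR_mem Sum.inl, _, toR_mem Sum.inr, ?_, Ideal.Quotient.eq_zero_iff_mem.mp hv⟩
  by_contra! h
  refine hv0 (funext (Sum.rec (fun i => ?_) fun i => ?_))
  · simp [← repr_toR, h.1]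
  · simp [← repr_toR, h.2]

-- If `s² ≡ m` modulo `P`, then `x² - m y²` lies in `P` as soon as `x - s y` does.
theorem exists_sq_sub_mul_sq_mem_norm_le [Finite ι] [Nonempty ι] (b : Module.Basis ι ℤ R) (m : R) :
    ∃ C : ℕ, ∀ (P : Ideal R) [Finite (R ⧸ P)] (s : R), s ^ 2 - m ∈ P →
      ∃ x y : R, (x ≠ 0 ∨ y ≠ 0) ∧ x ^ 2 - m * y ^ 2 ∈ P ∧
        (Algebra.norm ℤ (x ^ 2 - m * y ^ 2)).natAbs ≤ C * Nat.card (R ⧸ P) := by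
  have := Fintype.ofFinite ι
  obtain ⟨C₁, hC₁⟩ := exists_mul_mem_coordBox b
  obtain ⟨C₂, -, hC₂⟩ := exists_natAbs_norm_le b
  obtain ⟨A, hA⟩ := exists_mem_coordBox b m
  set n := Fintype.card ι
  refine ⟨C₂ * (C₁ + C₁ * A * C₁) ^ n * 2 ^ (2 * n), fun P _ s hs => ?_⟩
  obtain ⟨M, hcard, hM⟩ := exists_le_mul_pow_le one_pos (n := 2 * n) (Y := Nat.card (R ⧸ P))
    (mul_ne_zero two_ne_zero Fintype.card_ne_zero) Nat.card_pos
  rw [one_mul] at hcard hM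
  rw [one_mul] at hM
  obtain ⟨x, hx, y, hy, hxy, hmem⟩ := exists_sub_mul_mem_ideal b P s
    (hcard.trans_lt (Nat.pow_lt_pow_left M.lt_succ_self (by positivity)))
  refine ⟨x, y, hxy, ?_, ?_⟩
  · have := P.add_mem (P.mul_mem_left (x + s * y) hmem) (P.mul_mem_left (y ^ 2) hs)
    convert this using 1
    ring
  · have hbox := sub_mem_coordBox (hC₁ _ _ _ hx _ hx) (hC₁ _ _ _ hA _ (hC₁ _ _ _ hy _ hy))
    rw [← sq, ← sq] at hbox
    calc (Algebra.norm ℤ (x ^ 2 - m * y ^ 2)).natAbs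
        ≤ C₂ * (C₁ * M * M + C₁ * A * (C₁ * M * M)) ^ n := hC₂ _ _ hbox
      _ = C₂ * (C₁ + C₁ * A * C₁) ^ n * M ^ (2 * n) := by
        rw [pow_mul, mul_assoc C₂ (_ ^ _), ← mul_pow]
        ring
      _ ≤ C₂ * (C₁ + C₁ * A * C₁) ^ n * (2 ^ (2 * n) * Nat.card (R ⧸ P)) := by gcongr
      _ = _ := by ring

end SmallNormForm

section FiniteIndex

variable {M I : Type*} [AddCommGroup M] {w : I → M →+ ℤ} {S : Set I} {H : AddSubgroup M}

theorem exists_mem_forall_map_sub_eq_zero (hfin : ∀ x, {i | w i x ≠ 0}.Finite)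
    (hH : ∀ i ∉ S, ∃ h ∈ H, w i h = 1 ∧ ∀ j ∉ S, j ≠ i → w j h = 0) (x : M) :
    ∃ h ∈ H, ∀ j ∉ S, w j (x - h) = 0 := by
  classical
  choose! g hgH hg1 hg0 using hH
  let T := {i ∈ (hfin x).toFinset | i ∉ S}
  have mem_T {i} (hi : i ∈ T) : i ∉ S := (Finset.mem_filter.mp hi).2
  refine ⟨∑ i ∈ T, w i x • g i, sum_mem fun i hi => H.zsmul_mem (hgH i (mem_T hi)) _,
    fun j hj => ?_⟩
  rw [map_sub, map_sum, Finset.sum_eq_single j, map_zsmul, hg1 j hj, smul_eq_mul, mul_one, sub_self]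
  · intro i hi hij
    rw [map_zsmul, hg0 i (mem_T hi) j hj hij.symm, smul_zero]
  · intro hjT
    have : w j x = 0 := by simpa [T, hj] using hjT
    rw [this, zero_smul, map_zero]

theorem fg_iInf_compl_ker (hS : S.Finite)
    (hker : (⨅ i, LinearMap.ker (w i).toIntLinearMap).FG) :
    (⨅ i ∈ Sᶜ, LinearMap.ker (w i).toIntLinearMap).FG := by
  have : Finite S := hS
  let f : M →ₗ[ℤ] (S → ℤ) := LinearMap.pi fun i => (w i).toIntLinearMap
  refine Submodule.fg_of_fg_map_of_fg_inf_ker f (IsNoetherian.noetherian _) ?_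
  suffices h : (⨅ i ∈ Sᶜ, LinearMap.ker (w i).toIntLinearMap) ⊓ LinearMap.ker f =
      ⨅ i, LinearMap.ker (w i).toIntLinearMap from h ▸ hker
  ext x
  simp only [f, Submodule.mem_inf, Submodule.mem_iInf, LinearMap.mem_ker, Set.mem_compl_iff,
    funext_iff, LinearMap.pi_apply, AddMonoidHom.coe_toIntLinearMap, Pi.zero_apply,
    Subtype.forall]
  exact ⟨fun h i => by_cases (h.2 i) (h.1 i), fun h => ⟨fun i _ => h i, fun i _ => h i⟩⟩

theorem finite_quotient_of_nsmul_mem {n : ℕ} (hn : 0 < n) (hS : S.Finite)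
    (hfin : ∀ x, {i | w i x ≠ 0}.Finite)
    (hker : (⨅ i, LinearMap.ker (w i).toIntLinearMap).FG)
    (hH : ∀ i ∉ S, ∃ h ∈ H, w i h = 1 ∧ ∀ j ∉ S, j ≠ i → w j h = 0)
    (hnH : ∀ x, n • x ∈ H) : Finite (M ⧸ H) := by
  let V : Submodule ℤ M := ⨅ i ∈ Sᶜ, LinearMap.ker (w i).toIntLinearMap
  let q : V →ₗ[ℤ] M ⧸ H := (QuotientAddGroup.mk' H).toIntLinearMap.comp V.subtype
  have surjective_q : Function.Surjective q := by
    intro y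
    obtain ⟨x, rfl⟩ := QuotientAddGroup.mk_surjective y
    obtain ⟨h, hh, h0⟩ := exists_mem_forall_map_sub_eq_zero hfin hH x
    refine ⟨⟨x - h, ?_⟩, QuotientAddGroup.eq.mpr (by simpa using hh)⟩
    simp only [V, Submodule.mem_iInf, LinearMap.mem_ker]
    exact h0
  have : Module.Finite ℤ V := Module.Finite.iff_fg.mpr (fg_iInf_compl_ker hS hker)
  have : Module.Finite ℤ (M ⧸ H) := Module.Finite.of_surjective q surjective_q
  have : AddGroup.FG (M ⧸ H) := Module.Finite.iff_addGroup_fg.mp this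
  refine AddCommGroup.finite_of_fg_isAddTorsion _ fun y => ?_
  obtain ⟨x, rfl⟩ := QuotientAddGroup.mk_surjective y
  exact isOfFinAddOrder_iff_nsmul_eq_zero.mpr ⟨n, hn, (QuotientAddGroup.eq_zero_iff _).mpr (hnH x)⟩

end FiniteIndex

section OrdAt

open NumberField IsDedekindDomain WithZero

variable {k : Type*} [Field k] [NumberField k]

/-- The order of vanishing at a prime, a homomorphism on `kˣ` written additively; with this sign
convention elements of `P` have positive order. -/
noncomputable def ordAt (P : HeightOneSpectrum (𝓞 k)) : Additive kˣ →+ ℤ :=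
  -MonoidHom.toAdditiveLeft P.valuationOfNeZero

theorem ordAt_eq_iff {P : HeightOneSpectrum (𝓞 k)} {u : kˣ} {n : ℤ} :
    ordAt P (Additive.ofMul u) = n ↔ P.valuation k u = exp (-n) := by
  rw [← HeightOneSpectrum.valuationOfNeZero_eq]
  change -Multiplicative.toAdd (P.valuationOfNeZero u) = n ↔
    _ = ((Multiplicative.ofAdd (-n) : Multiplicative ℤ) : ℤᵐ⁰)
  rw [WithZero.coe_inj, neg_eq_iff_eq_neg]
  exact Iff.rfl

theorem ordAt_eq_zero_iff {P : HeightOneSpectrum (𝓞 k)} {u : kˣ} :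
    ordAt P (Additive.ofMul u) = 0 ↔ P.valuation k u = 1 := by
  rw [ordAt_eq_iff, neg_zero, exp_zero]

theorem ordAt_eq_multiplicity (P : HeightOneSpectrum (𝓞 k)) {u : kˣ} {h : 𝓞 k} (hu : (u : k) = h) :
    ordAt P (Additive.ofMul u) = multiplicity P.asIdeal (Ideal.span {h}) := by
  have h0 : h ≠ 0 := fun h0 => u.ne_zero (by rw [hu, h0, RingOfIntegers.coe_eq_zero_iff])
  rw [ordAt_eq_iff, hu, ← P.intValuation_eq_exp_neg_multiplicity h0]
  exact P.valuation_of_algebraMap h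

theorem finite_setOf_ordAt_ne_zero (x : Additive kˣ) :
    {P : HeightOneSpectrum (𝓞 k) | ordAt P x ≠ 0}.Finite := by
  refine ((HeightOneSpectrum.Support.finite (𝓞 k) (x.toMul : k)).union
    (HeightOneSpectrum.Support.finite (𝓞 k) (x.toMul : k)⁻¹)).subset fun P hP => ?_
  rcases lt_or_gt_of_ne (mt ordAt_eq_zero_iff.mpr hP) with h | h
  · right
    change 1 < P.valuation k (x.toMul : k)⁻¹
    rw [map_inv₀]
    exact (one_lt_inv₀ ((Valuation.pos_iff _).mpr x.toMul.ne_zero)).mpr h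
  · exact Or.inl h

theorem exists_units_map_eq_of_forall_valuation_eq_one {u : kˣ}
    (hu : ∀ P : HeightOneSpectrum (𝓞 k), P.valuation k u = 1) :
    ∃ v : (𝓞 k)ˣ, Units.map (algebraMap (𝓞 k) k : 𝓞 k →* k) v = u := by
  obtain ⟨a, ha⟩ := HeightOneSpectrum.mem_integers_of_valuation_le_one k (u : k) fun P => (hu P).le
  obtain ⟨b, hb⟩ := HeightOneSpectrum.mem_integers_of_valuation_le_one k (u : k)⁻¹
    fun P => by rw [map_inv₀, hu P, inv_one]
  have hab : a * b = 1 := by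
    apply FaithfulSMul.algebraMap_injective (𝓞 k) k
    rw [map_mul, ha, hb, map_one, mul_inv_cancel₀ u.ne_zero]
  exact ⟨Units.mkOfMulEqOne a b hab, Units.ext ha⟩

theorem fg_iInf_ker_ordAt :
    (⨅ P : HeightOneSpectrum (𝓞 k), LinearMap.ker (ordAt P).toIntLinearMap).FG := by
  let f : Additive (𝓞 k)ˣ →ₗ[ℤ] Additive kˣ :=
    (Units.map (algebraMap (𝓞 k) k : 𝓞 k →* k)).toAdditive.toIntLinearMap
  suffices (⨅ P : HeightOneSpectrum (𝓞 k), LinearMap.ker (ordAt P).toIntLinearMap) =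
      LinearMap.range f from this ▸ Submodule.FG.of_finite
  ext x
  simp only [Submodule.mem_iInf, LinearMap.mem_ker, LinearMap.mem_range,
    AddMonoidHom.coe_toIntLinearMap]
  constructor
  · intro hx
    exact exists_units_map_eq_of_forall_valuation_eq_one fun P => ordAt_eq_zero_iff.mp (hx P)
  · rintro ⟨u, rfl⟩ P
    change -Multiplicative.toAdd (P.valuationOfNeZero (Units.map _ u.toMul)) = 0
    rw [P.valuation_of_unit_eq (K := k) u.toMul, toAdd_one, neg_zero]

theorem not_dvd_of_absNorm_lt {I J : Ideal (𝓞 k)} (hJ : J ≠ 0)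
    (h : Ideal.absNorm J < Ideal.absNorm I) : ¬ I ∣ J := fun hIJ =>
  h.not_ge (Nat.le_of_dvd (Nat.pos_of_ne_zero (Ideal.absNorm_eq_zero_iff.not.mpr hJ))
    (map_dvd Ideal.absNorm hIJ))

theorem exists_span_singleton_eq_mul_absNorm_le {C : ℕ} {I : Ideal (𝓞 k)} (hI : I ≠ 0) {h : 𝓞 k}
    (h0 : h ≠ 0) (hmem : h ∈ I) (hN : (Algebra.norm ℤ h).natAbs ≤ C * Ideal.absNorm I) :
    ∃ J ≠ 0, Ideal.span {h} = I * J ∧ Ideal.absNorm J ≤ C := by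
  obtain ⟨J, hJ⟩ := Ideal.dvd_span_singleton.mpr hmem
  refine ⟨J, ?_, hJ, ?_⟩
  · rintro rfl
    rw [mul_zero] at hJ
    exact h0 (Ideal.span_singleton_eq_bot.mp hJ)
  · rw [← Ideal.absNorm_span_singleton, hJ, map_mul, mul_comm C] at hN
    exact Nat.le_of_mul_le_mul_left hN (Nat.pos_of_ne_zero (Ideal.absNorm_eq_zero_iff.not.mpr hI))

theorem ordAt_eq_of_mem_of_norm_le {C : ℕ} {P : HeightOneSpectrum (𝓞 k)}
    (hP : C < Ideal.absNorm P.asIdeal) {h : 𝓞 k} (hmem : h ∈ P.asIdeal)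
    (hN : (Algebra.norm ℤ h).natAbs ≤ C * Ideal.absNorm P.asIdeal) {u : kˣ} (hu : (u : k) = h) :
    ordAt P (Additive.ofMul u) = 1 ∧ ∀ Q : HeightOneSpectrum (𝓞 k),
      C < Ideal.absNorm Q.asIdeal → Q ≠ P → ordAt Q (Additive.ofMul u) = 0 := by
  have h0 : h ≠ 0 := fun h0 => u.ne_zero (by rw [hu, h0, RingOfIntegers.coe_eq_zero_iff])
  obtain ⟨J, hJ0, hJ, hJC⟩ := exists_span_singleton_eq_mul_absNorm_le P.ne_bot h0 hmem hN
  have not_dvd {Q : HeightOneSpectrum (𝓞 k)} (hQ : C < Ideal.absNorm Q.asIdeal) :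
      ¬ Q.asIdeal ∣ J := not_dvd_of_absNorm_lt hJ0 (hJC.trans_lt hQ)
  constructor
  · rw [ordAt_eq_multiplicity P hu, hJ, multiplicity_eq_of_dvd_of_not_dvd (k := 1), Nat.cast_one]
    · rw [pow_one]
      exact dvd_mul_right ..
    · rw [pow_add, pow_one, mul_dvd_mul_iff_left P.ne_bot]
      exact not_dvd hP
  · intro Q hQ hQP
    rw [ordAt_eq_multiplicity Q hu, hJ, Nat.cast_eq_zero, multiplicity_eq_zero]
    intro hQJ
    refine (Q.prime.dvd_or_dvd hQJ).elim (fun h => hQP (HeightOneSpectrum.ext ?_)) (not_dvd hQ)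
    exact (P.isMaximal.eq_of_le Q.isPrime.ne_top (Ideal.le_of_dvd h)).symm

end OrdAt

section NormForm

/-- The nonzero values of the form `x ^ 2 - m * y ^ 2`, as the group of norms from `K[√m]`. -/
def normFormSubgroup {K : Type*} [Field K] (m : K) : Subgroup Kˣ :=
  (Units.map (QuadraticAlgebra.norm : QuadraticAlgebra K m 0 →* K)).range

theorem mem_normFormSubgroup {K : Type*} [Field K] {m : K} {u : Kˣ} :
    u ∈ normFormSubgroup m ↔ ∃ x y : K, u = x ^ 2 - m * y ^ 2 := by
  have norm_eq (z : QuadraticAlgebra K m 0) : z.norm = z.re ^ 2 - m * z.im ^ 2 := by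
    rw [QuadraticAlgebra.norm_def]
    ring
  constructor
  · rintro ⟨z, rfl⟩
    exact ⟨z.val.re, z.val.im, norm_eq _⟩
  · rintro ⟨x, y, h⟩
    have hz : IsUnit (⟨x, y⟩ : QuadraticAlgebra K m 0) := by
      rw [QuadraticAlgebra.isUnit_iff_norm_isUnit, norm_eq]
      exact h ▸ u.isUnit
    exact ⟨hz.unit, Units.ext ((norm_eq _).trans h.symm)⟩

theorem isSquare_or_isSquare_or_isSquare_mul {F : Type*} [Field F] [Finite F] (a b : F) :
    IsSquare a ∨ IsSquare b ∨ IsSquare (a * b) := by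
  classical
  have := Fintype.ofFinite F
  by_cases h2 : ringChar F = 2
  · exact Or.inl (FiniteField.isSquare_of_char_two h2 a)
  by_cases ha : a = 0
  · exact Or.inl (ha ▸ IsSquare.zero)
  by_cases hb : b = 0
  · exact Or.inr (Or.inl (hb ▸ IsSquare.zero))
  rw [← quadraticChar_one_iff_isSquare ha, ← quadraticChar_one_iff_isSquare hb,
    ← quadraticChar_one_iff_isSquare (mul_ne_zero ha hb), map_mul]
  rcases quadraticChar_dichotomy ha with h | h <;>
    rcases quadraticChar_dichotomy hb with h' | h' <;> simp [h, h']

theorem sq_sub_mul_sq_ne_zero {K : Type*} [Field K] {m x y : K} (hm : ¬ IsSquare m)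
    (hxy : x ≠ 0 ∨ y ≠ 0) : x ^ 2 - m * y ^ 2 ≠ 0 := by
  intro h0
  by_cases hy : y = 0
  · exact hxy.elim (fun hx => hx (by simpa [hy] using h0)) fun h => h hy
  · exact hm ⟨x / y, by field_simp; linear_combination -h0⟩

open NumberField IsDedekindDomain

variable {k : Type*} [Field k] [NumberField k]

theorem exists_normForm_mem_norm_le {m : ℕ} (hm : ¬ IsSquare (m : k)) :
    ∃ C : ℕ, ∀ P : HeightOneSpectrum (𝓞 k), IsSquare (m : 𝓞 k ⧸ P.asIdeal) →
      ∃ h ∈ P.asIdeal, (Algebra.norm ℤ h).natAbs ≤ C * Ideal.absNorm P.asIdeal ∧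
        ∃ u ∈ normFormSubgroup (m : k), (u : k) = h := by
  have : Nonempty (Module.Free.ChooseBasisIndex ℤ (𝓞 k)) :=
    (Module.Free.chooseBasis ℤ (𝓞 k)).index_nonempty
  obtain ⟨C, hC⟩ := exists_sq_sub_mul_sq_mem_norm_le (Module.Free.chooseBasis ℤ (𝓞 k)) (m : 𝓞 k)
  refine ⟨C, fun P ⟨r, hr⟩ => ?_⟩
  have : Finite (𝓞 k ⧸ P.asIdeal) := Ideal.finiteQuotientOfFreeOfNeBot _ P.ne_bot
  obtain ⟨s, rfl⟩ := Ideal.Quotient.mk_surjective r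
  have hs : s ^ 2 - m ∈ P.asIdeal := by
    rw [← Ideal.Quotient.eq, map_pow, sq, ← hr, map_natCast]
  obtain ⟨x, y, hxy, hmem, hN⟩ := hC P.asIdeal s hs
  have hne : (x : k) ^ 2 - m * (y : k) ^ 2 ≠ 0 := sq_sub_mul_sq_ne_zero hm
    (by simpa only [ne_eq, RingOfIntegers.coe_eq_zero_iff] using hxy)
  refine ⟨x ^ 2 - m * y ^ 2, hmem, hN, Units.mk0 _ hne, mem_normFormSubgroup.mpr ⟨x, y, rfl⟩, ?_⟩
  push_cast
  rfl

theorem exists_sup_normForm_mem_norm_le {c d : ℕ} (hc : ¬ IsSquare (c : k))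
    (hd : ¬ IsSquare (d : k)) (hcd : ¬ IsSquare ((c * d : ℕ) : k)) :
    ∃ C : ℕ, ∀ P : HeightOneSpectrum (𝓞 k), ∃ h ∈ P.asIdeal,
      (Algebra.norm ℤ h).natAbs ≤ C * Ideal.absNorm P.asIdeal ∧
      ∃ u ∈ normFormSubgroup (c : k) ⊔ normFormSubgroup (d : k) ⊔
        normFormSubgroup ((c * d : ℕ) : k), (u : k) = h := by
  obtain ⟨C₁, h₁⟩ := exists_normForm_mem_norm_le hc
  obtain ⟨C₂, h₂⟩ := exists_normForm_mem_norm_le hd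
  obtain ⟨C₃, h₃⟩ := exists_normForm_mem_norm_le hcd
  refine ⟨C₁ + C₂ + C₃, fun P => ?_⟩
  have := P.isMaximal
  let : Field (𝓞 k ⧸ P.asIdeal) := Ideal.Quotient.field _
  have : Finite (𝓞 k ⧸ P.asIdeal) := Ideal.finiteQuotientOfFreeOfNeBot _ P.ne_bot
  rcases isSquare_or_isSquare_or_isSquare_mul (c : 𝓞 k ⧸ P.asIdeal) d with h | h | h
  · obtain ⟨x, hx, hN, u, hu, hux⟩ := h₁ P h
    exact ⟨x, hx, hN.trans (Nat.mul_le_mul_right _ (by lia)), u,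
      Subgroup.mem_sup_left (Subgroup.mem_sup_left hu), hux⟩
  · obtain ⟨x, hx, hN, u, hu, hux⟩ := h₂ P h
    exact ⟨x, hx, hN.trans (Nat.mul_le_mul_right _ (by lia)), u,
      Subgroup.mem_sup_left (Subgroup.mem_sup_right hu), hux⟩
  · obtain ⟨x, hx, hN, u, hu, hux⟩ := h₃ P (by rwa [Nat.cast_mul])
    exact ⟨x, hx, hN.trans (Nat.mul_le_mul_right _ (by lia)), u, Subgroup.mem_sup_right hu, hux⟩

theorem finiteIndex_sup_normFormSubgroup {c d : ℕ} (hc : ¬ IsSquare (c : k))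
    (hd : ¬ IsSquare (d : k)) (hcd : ¬ IsSquare ((c * d : ℕ) : k)) :
    (normFormSubgroup (c : k) ⊔ normFormSubgroup (d : k) ⊔
      normFormSubgroup ((c * d : ℕ) : k)).FiniteIndex := by
  set H := normFormSubgroup (c : k) ⊔ normFormSubgroup (d : k) ⊔ normFormSubgroup ((c * d : ℕ) : k)
  obtain ⟨C, hC⟩ := exists_sup_normForm_mem_norm_le hc hd hcd
  have finite_small : {P : HeightOneSpectrum (𝓞 k) | Ideal.absNorm P.asIdeal ≤ C}.Finite :=
    Set.Finite.preimage (f := fun P : HeightOneSpectrum (𝓞 k) => P.asIdeal)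
      (fun _ _ _ _ h => HeightOneSpectrum.ext h) (Ideal.finite_setOfPred_absNorm_le C)
  have : Finite (Additive kˣ ⧸ H.toAddSubgroup) := by
    refine finite_quotient_of_nsmul_mem two_pos finite_small finite_setOf_ordAt_ne_zero
      fg_iInf_ker_ordAt (fun P hP => ?_) fun x => ?_
    · obtain ⟨h, hmem, hN, u, hu, huh⟩ := hC P
      obtain ⟨e1, e2⟩ := ordAt_eq_of_mem_of_norm_le (not_le.mp hP) hmem hN huh
      exact ⟨Additive.ofMul u, hu, e1, fun Q hQ => e2 Q (not_le.mp hQ)⟩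
    · have : x.toMul ^ 2 ∈ H := Subgroup.mem_sup_left (Subgroup.mem_sup_left
        (mem_normFormSubgroup.mpr ⟨x.toMul, 0, by simp⟩))
      exact this
  have : Finite (kˣ ⧸ H) := this
  exact H.finiteIndex_of_finite_quotient

end NormForm

section QuadraticSubfield

variable {F E : Type*} [Field F] [Field E] [Algebra F E]

theorem exists_eq_add_mul_of_mem_adjoin {s z : E} {m : F} (hs : s * s = algebraMap F E m)
    (hz : z ∈ IntermediateField.adjoin F {s}) :
    ∃ x y : F, z = algebraMap F E x + algebraMap F E y * s := by
  have hInt : IsIntegral F s := .of_pow two_pos (by rw [sq, hs]; exact isIntegral_algebraMap)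
  rw [← IntermediateField.mem_toSubalgebra,
    IntermediateField.adjoin_simple_toSubalgebra_of_isAlgebraic hInt.isAlgebraic] at hz
  let φ : QuadraticAlgebra F m 0 →ₐ[F] E :=
    QuadraticAlgebra.lift ⟨s, by rw [hs, zero_smul, add_zero, Algebra.algebraMap_eq_smul_one]⟩
  have hφ (w : QuadraticAlgebra F m 0) :
      φ w = algebraMap F E w.re + algebraMap F E w.im * s := by
    rw [Algebra.algebraMap_eq_smul_one, ← Algebra.smul_def]
    rfl
  have hle : Algebra.adjoin F {s} ≤ φ.range := by
    rw [Algebra.adjoin_le_iff, Set.singleton_subset_iff]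
    exact ⟨⟨0, 1⟩, by simp [hφ]⟩
  obtain ⟨w, rfl⟩ := hle hz
  exact ⟨w.re, w.im, hφ w⟩

theorem isSquare_mul_of_adjoin_eq [NeZero (2 : F)] {s t : E} {m n : F}
    (hs : s * s = algebraMap F E m) (ht : t * t = algebraMap F E n) (hm : ¬ IsSquare m)
    (hn : ¬ IsSquare n)
    (h : IntermediateField.adjoin F {s} = IntermediateField.adjoin F {t}) : IsSquare (m * n) := by
  obtain ⟨x, y, rfl⟩ :=
    exists_eq_add_mul_of_mem_adjoin hs (h ▸ IntermediateField.mem_adjoin_simple_self F t)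
  have hinj := (algebraMap F E).injective
  -- squaring `t = x + y s` expresses `2 x y s` rationally
  have key : algebraMap F E (2 * x * y) * s = algebraMap F E (n - x ^ 2 - y ^ 2 * m) := by
    simp only [map_sub, map_mul, map_pow, ← ht, ← hs, map_ofNat]
    ring
  have hxy : 2 * x * y = 0 := by
    by_contra h0
    refine hm ⟨(n - x ^ 2 - y ^ 2 * m) / (2 * x * y), hinj ?_⟩
    rw [map_mul, map_div₀, ← key, mul_div_cancel_left₀ _ ((map_ne_zero _).mpr h0), hs]
  have hn' : n = x ^ 2 + y ^ 2 * m := by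
    rw [hxy, map_zero, zero_mul] at key
    linear_combination hinj (key.symm.trans (map_zero _).symm)
  rcases mul_eq_zero.mp hxy with h0 | h0
  · have hx : x = 0 := (mul_eq_zero.mp h0).resolve_left two_ne_zero
    exact ⟨y * m, by rw [hn', hx]; ring⟩
  · exact absurd ⟨x, by rw [hn', h0]; ring⟩ hn

end QuadraticSubfield

section Choice

theorem not_isSquare_mul_of_not_dvd {p b : ℕ} (hp : p.Prime) (hb : ¬ p ∣ b) :
    ¬ IsSquare (b * p) := by
  rintro ⟨r, hr⟩
  obtain ⟨t, rfl⟩ : p ∣ r := (hp.dvd_mul.mp (hr ▸ dvd_mul_left p b)).elim id id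
  exact hb ⟨t * t, Nat.eq_of_mul_eq_mul_right hp.pos (hr.trans (by ring))⟩

variable (k : Type*) [Field k] [NumberField k]

-- distinct such `p` generate distinct subfields `ℚ(√(a p))` of `k`
theorem finite_setOf_prime_isSquare_mul (a : ℕ) :
    {p : ℕ | p.Prime ∧ ¬ p ∣ a ∧ IsSquare ((a * p : ℕ) : k)}.Finite := by
  have : Finite (IntermediateField ℚ k) :=
    Field.finite_intermediateField_of_exists_primitive_element ℚ k
      (Field.exists_primitive_element ℚ k)
  have hroot : ∀ p ∈ {p : ℕ | p.Prime ∧ ¬ p ∣ a ∧ IsSquare ((a * p : ℕ) : k)},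
      ∃ s : k, s * s = algebraMap ℚ k ((a * p : ℕ) : ℚ) := by
    rintro p ⟨-, -, s, hs⟩
    exact ⟨s, by rw [← hs, map_natCast]⟩
  choose! s hs using hroot
  have not_isSquare {p b : ℕ} (hp : p.Prime) (hb : ¬ p ∣ b) : ¬ IsSquare ((b * p : ℕ) : ℚ) :=
    Rat.isSquare_natCast_iff.not.mpr (not_isSquare_mul_of_not_dvd hp hb)
  refine Set.Finite.of_injOn (f := fun p => IntermediateField.adjoin ℚ {s p}) (Set.mapsTo_univ _ _)
    (fun p hp q hq hpq => ?_) Set.finite_univ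
  have h := isSquare_mul_of_adjoin_eq (hs p hp) (hs q hq) (not_isSquare hp.1 hp.2.1)
    (not_isSquare hq.1 hq.2.1) hpq
  by_contra hne
  refine not_isSquare hq.1 (b := a * p * a) ?_ ?_
  · rw [hq.1.dvd_mul, hq.1.dvd_mul, not_or, not_or, Nat.prime_dvd_prime_iff_eq hq.1 hp.1]
    exact ⟨⟨hq.2.1, Ne.symm hne⟩, hq.2.1⟩
  · rwa [← Nat.cast_mul, ← mul_assoc] at h

theorem exists_primes_not_isSquare : ∃ c d : ℕ, c.Prime ∧ d.Prime ∧ c % 8 = 1 ∧ d ≠ 2 ∧ d ≠ c ∧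
    IsSquare (d : ZMod c) ∧ ¬ IsSquare (c : k) ∧ ¬ IsSquare (d : k) ∧
      ¬ IsSquare ((c * d : ℕ) : k) := by
  have finite_isSquare : {p : ℕ | p.Prime ∧ IsSquare (p : k)}.Finite :=
    (finite_setOf_prime_isSquare_mul k 1).subset fun p ⟨hp, h⟩ =>
      ⟨hp, hp.not_dvd_one, by rwa [one_mul]⟩
  obtain ⟨c, ⟨hc, hc8⟩, hck⟩ := ((Nat.infinite_setOfPred_prime_and_eq_mod (q := 8) (a := 1)
    isUnit_one).sdiff finite_isSquare).nonempty
  have : NeZero c := ⟨hc.ne_zero⟩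
  obtain ⟨d, ⟨hd, hdc⟩, hdk⟩ := ((Nat.infinite_setOfPred_prime_and_eq_mod (q := c) (a := 1)
    isUnit_one).sdiff ((finite_isSquare.union (finite_setOf_prime_isSquare_mul k c)).union
      (Set.toFinite {2, c}))).nonempty
  simp only [Set.mem_union, Set.mem_insert_iff, Set.mem_singleton_iff, not_or] at hdk
  obtain ⟨⟨hdk, hcdk⟩, hd2, hdc'⟩ := hdk
  refine ⟨c, d, hc, hd, ?_, hd2, hdc', ⟨1, by rw [hdc, mul_one]⟩, fun h => hck ⟨hc, h⟩,
    fun h => hdk ⟨hd, h⟩,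
    fun h => hcdk ⟨hd, fun hdvd => hdc' ((Nat.prime_dvd_prime_iff_eq hd hc).mp hdvd), h⟩⟩
  exact (ZMod.natCast_eq_natCast_iff' c 1 8).mp (by rw [hc8, Nat.cast_one])

end Choice

section Diophantine

open MvPolynomial

variable {K α : Type*} [Field K]

/-- A set of points with coordinates indexed by `α` is the solution set of finitely many polynomial
equations with finitely many existentially quantified variables. For `α = Fin n` this is
`IsDiophantine`; arbitrary finite types `σ` of variables and `ι` of equations avoid reindexing. -/
def HasDiophantineDescription (A : Set (α → K)) : Prop :=
  ∃ (σ ι : Type) (_ : Finite σ) (_ : Finite ι) (f : ι → MvPolynomial (α ⊕ σ) K),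
    ∀ a, a ∈ A ↔ ∃ b : σ → K, ∀ i, eval (Sum.elim a b) (f i) = 0

namespace HasDiophantineDescription

theorem isDiophantine {n : ℕ} {A : Set (Fin n → K)} (h : HasDiophantineDescription A) :
    IsDiophantine K A := by
  obtain ⟨σ, ι, _, _, f, hf⟩ := h
  obtain ⟨m, ⟨e⟩⟩ := Finite.exists_equiv_fin σ
  obtain ⟨r, ⟨e'⟩⟩ := Finite.exists_equiv_fin ι
  let ρ : Fin n ⊕ σ → Fin (n + m) := Sum.elim (Fin.castAdd m) (Fin.natAdd n ∘ e)
  have append_comp (a : Fin n → K) (b : Fin m → K) :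
      Fin.append a b ∘ ρ = Sum.elim a (b ∘ e) := by
    funext j
    rcases j with j | j
    · exact Fin.append_left a b j
    · exact Fin.append_right a b (e j)
  refine ⟨m, r, fun i => rename ρ (f (e'.symm i)), Set.ext fun a => ?_⟩
  simp only [hf, Set.mem_ofPred_eq, eval_rename, append_comp]
  constructor
  · rintro ⟨b, hb⟩
    exact ⟨b ∘ e.symm, fun i => by simpa [Function.comp_assoc] using hb (e'.symm i)⟩
  · rintro ⟨b, hb⟩
    exact ⟨b ∘ e, fun i => by simpa using hb (e' i)⟩

theorem empty : HasDiophantineDescription (∅ : Set (α → K)) :=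
  ⟨PEmpty, PUnit, inferInstance, inferInstance, fun _ => 1, fun t => by simp⟩

theorem union {A B : Set (α → K)} (hA : HasDiophantineDescription A)
    (hB : HasDiophantineDescription B) : HasDiophantineDescription (A ∪ B) := by
  obtain ⟨σ, ι, _, _, f, hf⟩ := hA
  obtain ⟨τ, κ, _, _, g, hg⟩ := hB
  refine ⟨σ ⊕ τ, ι × κ, inferInstance, inferInstance,
    fun i => rename (Sum.map id Sum.inl) (f i.1) * rename (Sum.map id Sum.inr) (g i.2),
    fun a => ?_⟩
  simp only [map_mul, eval_rename, Sum.elim_comp_map, Function.comp_id, mul_eq_zero,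
    Set.mem_union, hf, hg]
  constructor
  · rintro (⟨b, hb⟩ | ⟨b, hb⟩)
    · exact ⟨Sum.elim b 0, fun i => Or.inl (hb i.1)⟩
    · exact ⟨Sum.elim 0 b, fun i => Or.inr (hb i.2)⟩
  · rintro ⟨b, hb⟩
    by_contra! h
    obtain ⟨i, hi⟩ := h.1 (b ∘ Sum.inl)
    obtain ⟨j, hj⟩ := h.2 (b ∘ Sum.inr)
    exact (hb (i, j)).elim hi hj

theorem biUnion {γ : Type*} (s : Finset γ) {A : γ → Set (α → K)}
    (h : ∀ i ∈ s, HasDiophantineDescription (A i)) :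
    HasDiophantineDescription (⋃ i ∈ s, A i) := by
  classical
  induction s using Finset.induction_on with
  | empty => simpa using empty
  | insert i s _ ih =>
    rw [Finset.set_biUnion_insert]
    exact (h i (Finset.mem_insert_self i s)).union
      (ih fun j hj => h j (Finset.mem_insert_of_mem hj))

theorem eq_mul_sq (i : α) (m : K) :
    HasDiophantineDescription {a : α → K | ∃ y ≠ 0, a i = m * y ^ 2} := by
  refine ⟨Fin 2, Fin 2, inferInstance, inferInstance,
    ![X (.inr 0) * X (.inr 1) - 1, X (.inl i) - C m * X (.inr 0) ^ 2], fun a => ?_⟩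
  simp only [Fin.forall_fin_two, Matrix.cons_val_zero, Matrix.cons_val_one, map_sub, map_mul,
    map_pow, map_one, eval_X, eval_C, sub_eq_zero, Sum.elim_inl, Sum.elim_inr, Set.mem_ofPred_eq]
  exact ⟨fun ⟨y, hy, h⟩ => ⟨![y, y⁻¹], mul_inv_cancel₀ hy, h⟩,
    fun ⟨b, hb, h⟩ => ⟨b 0, left_ne_zero_of_mul_eq_one hb, h⟩⟩

end HasDiophantineDescription

theorem exists_val_eq_mem_sup_normFormSubgroup {l m n w : K} :
    (∃ u ∈ normFormSubgroup l ⊔ normFormSubgroup m ⊔ normFormSubgroup n, (u : K) = w) ↔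
      w ≠ 0 ∧ ∃ x₁ y₁ x₂ y₂ x₃ y₃ : K,
        w = (x₁ ^ 2 - l * y₁ ^ 2) * (x₂ ^ 2 - m * y₂ ^ 2) * (x₃ ^ 2 - n * y₃ ^ 2) := by
  constructor
  · rintro ⟨u, hu, rfl⟩
    obtain ⟨v, hv, u₃, hu₃, rfl⟩ := Subgroup.mem_sup.mp hu
    obtain ⟨u₁, hu₁, u₂, hu₂, rfl⟩ := Subgroup.mem_sup.mp hv
    obtain ⟨x₁, y₁, h₁⟩ := mem_normFormSubgroup.mp hu₁
    obtain ⟨x₂, y₂, h₂⟩ := mem_normFormSubgroup.mp hu₂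
    obtain ⟨x₃, y₃, h₃⟩ := mem_normFormSubgroup.mp hu₃
    exact ⟨Units.ne_zero _, x₁, y₁, x₂, y₂, x₃, y₃, by rw [← h₁, ← h₂, ← h₃]; push_cast; rfl⟩
  · rintro ⟨hw, x₁, y₁, x₂, y₂, x₃, y₃, rfl⟩
    have h₁₂ := left_ne_zero_of_mul hw
    have mem {e x y : K} (h : x ^ 2 - e * y ^ 2 ≠ 0) : Units.mk0 _ h ∈ normFormSubgroup e :=
      mem_normFormSubgroup.mpr ⟨x, y, rfl⟩
    exact ⟨_, Subgroup.mul_mem_sup (Subgroup.mul_mem_sup (mem (left_ne_zero_of_mul h₁₂))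
      (mem (right_ne_zero_of_mul h₁₂))) (mem (right_ne_zero_of_mul hw)), rfl⟩

theorem HasDiophantineDescription.sq_sub_mul_sq_mem_coset (i : α) (e l m n : K) {g : K}
    (hg : g ≠ 0) :
    HasDiophantineDescription {a : α → K | ∃ x y : K,
      ∃ u ∈ normFormSubgroup l ⊔ normFormSubgroup m ⊔ normFormSubgroup n,
        (u : K) = g⁻¹ * (x ^ 2 - e * a i * y ^ 2)} := by
  refine ⟨Fin 9, Fin 2, inferInstance, inferInstance,
    ![(X (.inr 0) ^ 2 - C e * X (.inl i) * X (.inr 1) ^ 2) * X (.inr 8) - 1,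
      C g⁻¹ * (X (.inr 0) ^ 2 - C e * X (.inl i) * X (.inr 1) ^ 2) -
        (X (.inr 2) ^ 2 - C l * X (.inr 3) ^ 2) * (X (.inr 4) ^ 2 - C m * X (.inr 5) ^ 2) *
          (X (.inr 6) ^ 2 - C n * X (.inr 7) ^ 2)], fun a => ?_⟩
  simp only [exists_val_eq_mem_sup_normFormSubgroup, Fin.forall_fin_two, Matrix.cons_val_zero,
    Matrix.cons_val_one, map_sub, map_mul, map_pow, map_one, eval_X, eval_C, sub_eq_zero,
    Sum.elim_inl, Sum.elim_inr, Set.mem_ofPred_eq]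
  constructor
  · rintro ⟨x, y, h0, x₁, y₁, x₂, y₂, x₃, y₃, h⟩
    exact ⟨![x, y, x₁, y₁, x₂, y₂, x₃, y₃, (x ^ 2 - e * a i * y ^ 2)⁻¹],
      mul_inv_cancel₀ (right_ne_zero_of_mul h0), h⟩
  · rintro ⟨b, h0, h⟩
    exact ⟨b 0, b 1, mul_ne_zero (inv_ne_zero hg) (left_ne_zero_of_mul_eq_one h0),
      b 2, b 3, b 4, b 5, b 6, b 7, h⟩

end Diophantine

theorem exists_finset_forall_map_eq_iff {G M : Type*} [Group G] [Group M] (φ : G →* M)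
    {H : Subgroup G} [H.FiniteIndex] (hH : H ≤ φ.ker) (m : M) :
    ∃ Γ : Finset G, ∀ v, φ v = m ↔ ∃ g ∈ Γ, g⁻¹ * v ∈ H := by
  classical
  have := Fintype.ofFinite (G ⧸ H)
  have map_eq {g v : G} (h : g⁻¹ * v ∈ H) : φ v = φ g := φ.eq_iff.mpr (hH h)
  refine ⟨{g ∈ Finset.univ.image (Quotient.out : G ⧸ H → G) | φ g = m}, fun v => ⟨fun hv => ?_, ?_⟩⟩
  · have hmem : (v : G ⧸ H).out⁻¹ * v ∈ H := QuotientGroup.eq.mp (Quotient.out_eq _)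
    exact ⟨_, Finset.mem_filter.mpr ⟨Finset.mem_image_of_mem _ (Finset.mem_univ _),
      (map_eq hmem).symm.trans hv⟩, hmem⟩
  · rintro ⟨g, hg, hgv⟩
    exact (map_eq hgv).trans (Finset.mem_filter.mp hg).2

section Main

variable {k : Type*} [Field k] [NumberField k] {c d : ℕ}

theorem sup_normFormSubgroup_le_ker (hc : c.Prime) (hd : d.Prime) (hc8 : c % 8 = 1) (hd2 : d ≠ 2)
    (hdc : IsSquare (d : ZMod c)) (hdc0 : d ≠ c) :
    normFormSubgroup (c : k) ⊔ normFormSubgroup (d : k) ⊔ normFormSubgroup ((c * d : ℕ) : k) ≤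
      (Units.map (normSign (k := k) c d).toMonoidHom).ker := by
  have le_ker {m : ℕ} (h : ∀ x y : ℤ, x ^ 2 - m * y ^ 2 ≠ 0 →
      nonresidueSign c d (x ^ 2 - m * y ^ 2).natAbs = 1) :
      normFormSubgroup (m : k) ≤ (Units.map (normSign (k := k) c d).toMonoidHom).ker := by
    intro v hv
    obtain ⟨x, y, hxy⟩ := mem_normFormSubgroup.mp hv
    refine Units.ext ?_
    change normSign c d (v : k) = 1
    rw [hxy]
    exact normSign_sq_sub_mul_sq h x y (hxy ▸ v.ne_zero)
  exact sup_le (sup_le (le_ker nonresidueSign_sq_sub_mul_sq_left)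
    (le_ker nonresidueSign_sq_sub_mul_sq_right))
    (le_ker (nonresidueSign_sq_sub_mul_sq_mul hc hd hc8 hd2 hdc hdc0))

theorem not_isSquare_of_normSign_eq_neg_one {t x y : k}
    (h : normSign c d (x ^ 2 - c * t * y ^ 2) = -1) : ¬ IsSquare t := by
  rintro ⟨s, rfl⟩
  have hval : x ^ 2 - c * (s * s) * y ^ 2 = x ^ 2 - c * (s * y) ^ 2 := by ring
  rw [hval] at h
  by_cases h0 : x ^ 2 - (c : k) * (s * y) ^ 2 = 0
  · rw [h0, map_zero] at h
    norm_num at h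
  · rw [normSign_sq_sub_mul_sq nonresidueSign_sq_sub_mul_sq_left _ _ h0] at h
    norm_num at h

theorem ne_zero_and_not_isSquare_of_eq_mul_sq {K : Type*} [Field K] {m t y : K} (hm : ¬ IsSquare m)
    (hy : y ≠ 0) (h : t = m * y ^ 2) : t ≠ 0 ∧ ¬ IsSquare t := by
  have hm0 : m ≠ 0 := fun h0 => hm (h0 ▸ IsSquare.zero)
  subst h
  exact ⟨mul_ne_zero hm0 (pow_ne_zero 2 hy), fun h =>
    hm (isSquare_left_of_isSquare_mul (pow_ne_zero 2 hy) h (IsSquare.sq y))⟩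

theorem exists_eq_mul_sq_of_isSquare_mul {K : Type*} [Field K] {m t : K} (hm : m ≠ 0) (ht : t ≠ 0)
    (h : IsSquare (m * t)) : ∃ y ≠ 0, t = m * y ^ 2 := by
  obtain ⟨r, hr⟩ := h
  have hr0 : r ≠ 0 := fun h0 => mul_ne_zero hm ht (by rw [hr, h0, mul_zero])
  refine ⟨r / m, div_ne_zero hr0 hm, ?_⟩
  field_simp
  linear_combination hr

theorem ne_zero_and_not_isSquare_iff (hc : ¬ IsSquare (c : k)) (hd : ¬ IsSquare (d : k))
    (hcd : ¬ IsSquare ((c * d : ℕ) : k)) (t : k) :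
    (t ≠ 0 ∧ ¬ IsSquare t) ↔ (∃ m ∈ ({c, d, c * d} : Finset ℕ), ∃ y : k, y ≠ 0 ∧ t = m * y ^ 2) ∨
      ∃ x y : k, normSign c d (x ^ 2 - c * t * y ^ 2) = -1 := by
  have not_isSquare : ∀ m ∈ ({c, d, c * d} : Finset ℕ), ¬ IsSquare (m : k) := by
    simp only [Finset.mem_insert, Finset.mem_singleton]
    rintro m (rfl | rfl | rfl) <;> assumption
  constructor
  · rintro ⟨ht0, ht⟩
    by_cases hm : ∃ m ∈ ({c, d, c * d} : Finset ℕ), IsSquare ((m : k) * t)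
    · obtain ⟨m, hm, hmt⟩ := hm
      refine Or.inl ⟨m, hm, exists_eq_mul_sq_of_isSquare_mul (fun h0 => ?_) ht0 hmt⟩
      exact not_isSquare m hm (h0 ▸ IsSquare.zero)
    · push Not at hm
      refine Or.inr (exists_normSign_eq_neg_one ?_ hc hd (by rwa [← Nat.cast_mul]) ht
        (hm c (by simp)) (hm d (by simp)) ?_)
      · rintro rfl
        exact hc (by simp)
      · rw [← Nat.cast_mul]
        exact hm (c * d) (by simp)
  · rintro (⟨m, hm, y, hy, h⟩ | ⟨x, y, h⟩)
    · exact ne_zero_and_not_isSquare_of_eq_mul_sq (not_isSquare m hm) hy h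
    · have ht := not_isSquare_of_normSign_eq_neg_one h
      exact ⟨fun h0 => ht (h0 ▸ IsSquare.zero), ht⟩

theorem exists_finset_normSign_eq_neg_one_iff {H : Subgroup kˣ} [H.FiniteIndex]
    (hH : H ≤ (Units.map (normSign (k := k) c d).toMonoidHom).ker) :
    ∃ Γ : Finset kˣ, ∀ v : k, normSign c d v = -1 ↔
      ∃ g ∈ Γ, ∃ u ∈ H, (u : k) = (g : k)⁻¹ * v := by
  obtain ⟨Γ, hΓ⟩ := exists_finset_forall_map_eq_iff _ hH (-1)
  have normSign_iff (v : kˣ) : normSign c d (v : k) = -1 ↔ ∃ g ∈ Γ, g⁻¹ * v ∈ H := by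
    rw [← hΓ, Units.ext_iff]
    rfl
  refine ⟨Γ, fun v => ⟨fun hv => ?_, ?_⟩⟩
  · have hv0 : v ≠ 0 := by
      rintro rfl
      rw [map_zero] at hv
      norm_num at hv
    obtain ⟨g, hg, hmem⟩ := (normSign_iff (Units.mk0 v hv0)).mp hv
    exact ⟨g, hg, _, hmem, by simp⟩
  · rintro ⟨g, hg, u, hu, huv⟩
    have hv : v = (g * u : kˣ) := by rw [Units.val_mul, huv, mul_inv_cancel_left₀ g.ne_zero]
    exact hv ▸ (normSign_iff (g * u)).mpr ⟨g, hg, by rwa [inv_mul_cancel_left]⟩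

theorem hasDiophantineDescription_normSign_eq_neg_one {l m n : k}
    [(normFormSubgroup l ⊔ normFormSubgroup m ⊔ normFormSubgroup n).FiniteIndex]
    (h : normFormSubgroup l ⊔ normFormSubgroup m ⊔ normFormSubgroup n ≤
      (Units.map (normSign (k := k) c d).toMonoidHom).ker) (e : k) {α : Type*} (i : α) :
    HasDiophantineDescription
      {a : α → k | ∃ x y : k, normSign c d (x ^ 2 - e * a i * y ^ 2) = -1} := by
  obtain ⟨Γ, hΓ⟩ := exists_finset_normSign_eq_neg_one_iff h
  convert HasDiophantineDescription.biUnion Γ fun g _ =>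
    HasDiophantineDescription.sq_sub_mul_sq_mem_coset i e l m n g.ne_zero using 1
  ext a
  simp only [Set.mem_ofPred_eq, hΓ, Set.mem_iUnion, exists_prop]
  constructor
  · rintro ⟨x, y, g, hg, hu⟩
    exact ⟨g, hg, x, y, hu⟩
  · rintro ⟨g, hg, x, y, hu⟩
    exact ⟨x, y, g, hg, hu⟩

end Main

/-- For any number field `k`, the set `k^× − k^{×2}` of nonzero non-squares
is diophantine over `k`. -/
theorem nonsquares_isDiophantine (k : Type*) [Field k] [NumberField k] :
    IsDiophantineSet k {t : k | t ≠ 0 ∧ ¬ ∃ s : k, s ≠ 0 ∧ s ^ 2 = t} := by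
  obtain ⟨c, d, hcp, hdp, hc8, hd2, hdc0, hdc, hc, hd, hcd⟩ := exists_primes_not_isSquare k
  have := finiteIndex_sup_normFormSubgroup hc hd hcd
  have hker := sup_normFormSubgroup_le_ker (k := k) hcp hdp hc8 hd2 hdc hdc0
  have hset : {a : Fin 1 → k | a 0 ≠ 0 ∧ ¬ ∃ s : k, s ≠ 0 ∧ s ^ 2 = a 0} =
      (⋃ m ∈ ({c, d, c * d} : Finset ℕ), {a | ∃ y : k, y ≠ 0 ∧ a 0 = m * y ^ 2}) ∪
        {a | ∃ x y : k, normSign c d (x ^ 2 - c * a 0 * y ^ 2) = -1} := by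
    ext a
    have hsq (ha : a 0 ≠ 0) : (∃ s : k, s ≠ 0 ∧ s ^ 2 = a 0) ↔ IsSquare (a 0) := by
      rw [isSquare_iff_exists_sq]
      exact ⟨fun ⟨s, _, hs⟩ => ⟨s, hs.symm⟩,
        fun ⟨s, hs⟩ => ⟨s, fun h0 => ha (by rw [hs, h0, sq, mul_zero]), hs.symm⟩⟩
    simp only [Set.mem_ofPred_eq, Set.mem_union, Set.mem_iUnion, exists_prop,
      ← ne_zero_and_not_isSquare_iff hc hd hcd]
    exact and_congr_right fun ha => not_congr (hsq ha)
  exact HasDiophantineDescription.isDiophantine <| hset ▸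
    (HasDiophantineDescription.biUnion _ fun m _ => .eq_mul_sq 0 _).union
      (hasDiophantineDescription_normSign_eq_neg_one hker c 0)
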